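/- arXiv:math/0507149 — 4 statements merged into one kernel-verified Lean document; each statement's English description precedes it below -/
import Mathlib

section
/- There exists a bijection Ψ from S_n to S_n such that for every permutation π: the set of weak excedance bottoms of Ψ(π) equals the set obtained by adding 1 to each descent bottom of π and adjoining 1; the set of weak excedance tops of Ψ(π) equals the set obtained by subtracting 1 from each descent top of π and adjoining n; and C_EE(Ψ(π)) + C_NN(Ψ(π)) equals the total right embracing number of π. -/
open Finset


def wexB {n : ℕ} (π : Equiv.Perm (Fin n)) : Finset (Fin n) :=
  Finset.univ.filter (fun i => i ≤ π i)

def wex {n : ℕ} (π : Equiv.Perm (Fin n)) : ℕ := (wexB π).card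

def wexbotsum {n : ℕ} (π : Equiv.Perm (Fin n)) : ℕ := ∑ i ∈ wexB π, (i.val + 1)

def wextopsum {n : ℕ} (π : Equiv.Perm (Fin n)) : ℕ := ∑ i ∈ wexB π, ((π i).val + 1)

def wexbotsSet {n : ℕ} (π : Equiv.Perm (Fin n)) : Finset ℕ :=
  (wexB π).image (fun i => i.val + 1)

def wextopsSet {n : ℕ} (π : Equiv.Perm (Fin n)) : Finset ℕ :=
  (wexB π).image (fun i => (π i).val + 1)

/-- `A_EE`: pairs `(i,j)` with `j < i ≤ π i < π j`. -/
def AEE {n : ℕ} (π : Equiv.Perm (Fin n)) : ℕ :=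
  (Finset.univ.filter (fun p : Fin n × Fin n =>
    p.2 < p.1 ∧ p.1 ≤ π p.1 ∧ π p.1 < π p.2)).card

/-- `A_NN`: pairs `(i,j)` with `π j < π i < i < j`. -/
def ANN {n : ℕ} (π : Equiv.Perm (Fin n)) : ℕ :=
  (Finset.univ.filter (fun p : Fin n × Fin n =>
    π p.2 < π p.1 ∧ π p.1 < p.1 ∧ p.1 < p.2)).card

/-- `A_EN`: pairs `(i,j)` with `j ≤ π j < π i < i`. -/
def AEN {n : ℕ} (π : Equiv.Perm (Fin n)) : ℕ :=
  (Finset.univ.filter (fun p : Fin n × Fin n =>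
    p.2 ≤ π p.2 ∧ π p.2 < π p.1 ∧ π p.1 < p.1)).card

/-- `A_NE`: pairs `(i,j)` with `π i < i < j ≤ π j`. -/
def ANE {n : ℕ} (π : Equiv.Perm (Fin n)) : ℕ :=
  (Finset.univ.filter (fun p : Fin n × Fin n =>
    π p.1 < p.1 ∧ p.1 < p.2 ∧ p.2 ≤ π p.2)).card

/-- `C_EE`: pairs `(i,j)` with `j < i ≤ π j < π i`. -/
def CEE {n : ℕ} (π : Equiv.Perm (Fin n)) : ℕ :=
  (Finset.univ.filter (fun p : Fin n × Fin n =>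
    p.2 < p.1 ∧ p.1 ≤ π p.2 ∧ π p.2 < π p.1)).card

/-- `C_NN`: pairs `(i,j)` with `π i < π j < i < j`. -/
def CNN {n : ℕ} (π : Equiv.Perm (Fin n)) : ℕ :=
  (Finset.univ.filter (fun p : Fin n × Fin n =>
    π p.1 < π p.2 ∧ π p.2 < p.1 ∧ p.1 < p.2)).card

def descents {n : ℕ} (π : Equiv.Perm (Fin n)) : Finset (Fin n) :=
  Finset.univ.filter (fun i => ∃ h : i.val + 1 < n, π ⟨i.val + 1, h⟩ < π i)

def des {n : ℕ} (π : Equiv.Perm (Fin n)) : ℕ := (descents π).card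

def destopsum {n : ℕ} (π : Equiv.Perm (Fin n)) : ℕ :=
  ∑ i ∈ descents π, ((π i).val + 1)

def desbotsum {n : ℕ} (π : Equiv.Perm (Fin n)) : ℕ :=
  ∑ i ∈ descents π, (if h : i.val + 1 < n then (π ⟨i.val + 1, h⟩).val + 1 else 0)

def destopsSet {n : ℕ} (π : Equiv.Perm (Fin n)) : Finset ℕ :=
  (descents π).image (fun i => (π i).val + 1)

def desbotsSet {n : ℕ} (π : Equiv.Perm (Fin n)) : Finset ℕ :=
  (descents π).image
    (fun i => if h : i.val + 1 < n then (π ⟨i.val + 1, h⟩).val + 1 else 0)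

def maj {n : ℕ} (π : Equiv.Perm (Fin n)) : ℕ := ∑ i ∈ descents π, (i.val + 1)

/-- Occurrences of the generalized pattern `(2-31)`. -/
def P2d31 {n : ℕ} (π : Equiv.Perm (Fin n)) : ℕ :=
  (Finset.univ.filter (fun p : Fin n × Fin n =>
    p.1 < p.2 ∧ ∃ h : p.2.val + 1 < n,
      π ⟨p.2.val + 1, h⟩ < π p.1 ∧ π p.1 < π p.2)).card

/-- Occurrences of the generalized pattern `(31-2)`. -/
def P31d2 {n : ℕ} (π : Equiv.Perm (Fin n)) : ℕ :=
  (Finset.univ.filter (fun p : Fin n × Fin n =>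
    ∃ h : p.1.val + 1 < n, π ⟨p.1.val + 1, h⟩ < π p.1 ∧ p.1.val + 1 < p.2.val ∧
      π ⟨p.1.val + 1, h⟩ < π p.2 ∧ π p.2 < π p.1)).card

/-- Occurrences of the generalized pattern `(21-3)`. -/
def P21d3 {n : ℕ} (π : Equiv.Perm (Fin n)) : ℕ :=
  (Finset.univ.filter (fun p : Fin n × Fin n =>
    ∃ h : p.1.val + 1 < n, π ⟨p.1.val + 1, h⟩ < π p.1 ∧ p.1.val + 1 < p.2.val ∧
      π p.1 < π p.2)).card

/-- Occurrences of the generalized pattern `(3-21)`. -/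
def P3d21 {n : ℕ} (π : Equiv.Perm (Fin n)) : ℕ :=
  (Finset.univ.filter (fun p : Fin n × Fin n =>
    p.1 < p.2 ∧ ∃ h : p.2.val + 1 < n,
      π ⟨p.2.val + 1, h⟩ < π p.2 ∧ π p.2 < π p.1)).card

/-- Occurrences of the generalized pattern `(1-32)`. -/
def P1d32 {n : ℕ} (π : Equiv.Perm (Fin n)) : ℕ :=
  (Finset.univ.filter (fun p : Fin n × Fin n =>
    p.1 < p.2 ∧ ∃ h : p.2.val + 1 < n,
      π ⟨p.2.val + 1, h⟩ < π p.2 ∧ π p.1 < π ⟨p.2.val + 1, h⟩)).card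

/-- Occurrences of the generalized pattern `(32-1)`. -/
def P32d1 {n : ℕ} (π : Equiv.Perm (Fin n)) : ℕ :=
  (Finset.univ.filter (fun p : Fin n × Fin n =>
    ∃ h : p.1.val + 1 < n, π ⟨p.1.val + 1, h⟩ < π p.1 ∧ p.1.val + 1 < p.2.val ∧
      π p.2 < π ⟨p.1.val + 1, h⟩)).card


/-- A permutation tableau with `n-k` columns, encoded as a `{0,1,2}`-filling of the full
`k × m` rectangle: the `2`'s are the boxes outside the Young diagram (southeast corner). -/
def IsPermTableau {k m : ℕ} (T : Fin k → Fin m → Fin 3) : Prop :=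
  (∀ j : Fin m, ∃ i : Fin k, T i j = 1) ∧
  (∀ (i : Fin k) (j : Fin m), T i j ≠ 2 →
    ∀ (i' : Fin k) (j' : Fin m), i' ≤ i → j' ≤ j → T i' j' ≠ 2) ∧
  (∀ (i : Fin k) (j : Fin m), T i j = 0 →
    ¬ ((∃ i' < i, T i' j = 1) ∧ (∃ j' < j, T i j' = 1)))

def rowLen {k m : ℕ} (T : Fin k → Fin m → Fin 3) (i : Fin k) : ℕ :=
  (Finset.univ.filter (fun j => T i j ≠ 2)).card

def zerosT {k m : ℕ} (T : Fin k → Fin m → Fin 3) : ℕ :=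
  ∑ i, (Finset.univ.filter (fun j => T i j = 0)).card

def onesT {k m : ℕ} (T : Fin k → Fin m → Fin 3) : ℕ :=
  ∑ i, (Finset.univ.filter (fun j => T i j = 1)).card

def twosT {k m : ℕ} (T : Fin k → Fin m → Fin 3) : ℕ :=
  ∑ i, (Finset.univ.filter (fun j => T i j = 2)).card

/-- A valid `0/1`-filling of the Young diagram with row lengths `lam`. -/
def ValidFilling {k : ℕ} (lam : Fin k → ℕ) (F : ∀ i : Fin k, Fin (lam i) → Bool) : Prop :=
  (∀ (i : Fin k) (j : Fin (lam i)), ∃ (i' : Fin k) (h : (j : ℕ) < lam i'), F i' ⟨j, h⟩ = true) ∧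
  (∀ (i : Fin k) (j : Fin (lam i)), F i j = false →
    ¬ ((∃ (i' : Fin k) (h : (j : ℕ) < lam i'), i' < i ∧ F i' ⟨j, h⟩ = true) ∧
       (∃ j' : Fin (lam i), j' < j ∧ F i j' = true)))

def fillZeros {k : ℕ} {lam : Fin k → ℕ} (F : ∀ i : Fin k, Fin (lam i) → Bool) : ℕ :=
  ∑ i, (Finset.univ.filter (fun j => F i j = false)).card

def fillOnes {k : ℕ} {lam : Fin k → ℕ} (F : ∀ i : Fin k, Fin (lam i) → Bool) : ℕ :=
  ∑ i, (Finset.univ.filter (fun j => F i j = true)).card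

open Classical in
/-- `F_λ(p,q)`, evaluated at integers `p`, `q`: the sum over valid fillings of
`p ^ (#0's) * q ^ (#1's)`. -/
noncomputable def Fval {k : ℕ} (lam : Fin k → ℕ) (p q : ℤ) : ℤ :=
  ∑ F ∈ Finset.univ.filter
      (fun F : ∀ i : Fin k, Fin (lam i) → Bool => ValidFilling lam F),
    p ^ fillZeros F * q ^ fillOnes F

/-!
For prescribed sets `E`, `F` of weak excedance bottoms and tops, a permutation `τ` sends the positions
in `E` to values in `F` weakly above them and the remaining positions to values strictly below them.
Each crossing counted by `C_EE + C_NN` is charged to the value in its middle. Processing the values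
of `F` upwards and the other values downwards, any crossing numbers `c` can be realised greedily, as
long as each value `v` still finds more than `c v` admissible free positions:
`c v + #{x ∈ F | x < v} < #{x ∈ E | x ≤ v}`.

If `E` and `F` come from the descent bottoms `B` and the descent tops `T` of `π`, and `c v` is the
right embracing number of `v`, this says that `c v + #{t ∈ T | t ≤ v} ≤ #{b ∈ B | b < v}`. It holds
because the descents with bottom `< v ≤` top number `#{b ∈ B | b < v} - #{t ∈ T | t < v}`, and those
to the right of `v`, together with the one with top `v` if there is one, are among them.

Conversely, `B`, `T` and the right embracing numbers determine `π`: the number of such descents to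
the right of a given position tells on which side of `v` the position lies, and for the position of a
smaller letter this number depends only on `B`, `T` and the relative order of the letters smaller
than `v`. So the assignment is injective, hence bijective.
-/

section Matching

variable {α : Type*} [LinearOrder α]

theorem exists_mem_card_filter_gt_eq (s : Finset α) {k : ℕ} (hk : k < #s) :
    ∃ a ∈ s, #{x ∈ s | a < x} = k := by
  have hmaps : Set.MapsTo (fun a => #{x ∈ s | a < x}) s (range #s) := fun a ha =>
    mem_coe.2 <| mem_range.2 <| card_lt_card <| filter_ssubset.2 ⟨a, ha, lt_irrefl a⟩
  have hanti : StrictAntiOn (fun a => #{x ∈ s | a < x}) s := fun a _ b hb hab =>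
    card_lt_card <| (ssubset_iff_of_subset <|
      monotone_filter_right s fun _ _ hbx => hab.trans hbx).2 ⟨b, by simp_all, by simp⟩
  exact surjOn_of_injOn_of_card_le _ hmaps hanti.injOn (card_range _).le (by simpa using hk)

theorem card_filter_comp_of_bijOn {α β : Type*} {f : α → β} {s : Finset α} {t : Finset β}
    (hf : Set.BijOn f s t) (p : β → Prop) [DecidablePred p] :
    #{x ∈ s | p (f x)} = #{y ∈ t | p y} := by
  refine Set.BijOn.finsetCard_eq f
    ⟨fun x hx => ?_, hf.injOn.mono (filter_subset _ _), fun y hy => ?_⟩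
  · simp only [coe_filter, Set.mem_ofPred_eq] at hx ⊢
    exact ⟨hf.mapsTo hx.1, hx.2⟩
  · simp only [coe_filter, Set.mem_ofPred_eq] at hy
    obtain ⟨x, hx, rfl⟩ := hf.surjOn hy.1
    exact ⟨x, by simpa using ⟨hx, hy.2⟩, rfl⟩

theorem exists_perm_eqOn_of_bijOn_compl {α : Type*} {f g : α → α} {s t : Set α}
    (hf : Set.BijOn f s t) (hg : Set.BijOn g sᶜ tᶜ) :
    ∃ σ : Equiv.Perm α, (∀ x ∈ s, σ x = f x) ∧ ∀ x ∉ s, σ x = g x := by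
  classical
  have hs : Set.EqOn (s.piecewise f g) f s := s.piecewise_eqOn f g
  have hsc : Set.EqOn (s.piecewise f g) g sᶜ := s.piecewise_eqOn_compl f g
  have hbij : Set.BijOn (s.piecewise f g) Set.univ Set.univ := by
    convert_to Set.BijOn (s.piecewise f g) (s ∪ sᶜ) (t ∪ tᶜ) using 1
    · exact s.union_compl_self.symm
    · exact t.union_compl_self.symm
    refine (hf.congr hs.symm).union (hg.congr hsc.symm) ?_
    rw [Set.union_compl_self, Set.injOn_univ, Set.injective_piecewise_iff]
    exact ⟨hf.injOn, hg.injOn, fun x hx y hy hxy => hg.mapsTo hy (hxy ▸ hf.mapsTo hx)⟩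
  exact ⟨Equiv.ofBijective _ (Set.bijOn_univ.1 hbij), hs, hsc⟩

theorem card_filter_insert_update_of_bijOn {a p : α} {s t : Finset α} {σ : α → α}
    (hat : ∀ x ∈ t, a < x) (hσ : Set.BijOn σ t (s.erase p)) (P : α → Prop) [DecidablePred P] :
    #{x ∈ insert a t | a < x ∧ p < Function.update σ a p x ∧ P (Function.update σ a p x)} =
      #{y ∈ {y ∈ s | P y} | p < y} := by
  calc #{x ∈ insert a t | a < x ∧ p < Function.update σ a p x ∧ P (Function.update σ a p x)}
      = #{x ∈ t | p < σ x ∧ P (σ x)} := by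
        rw [filter_insert, if_neg (by simp)]
        congr 1
        refine filter_congr fun x hx => ?_
        simp [Function.update_of_ne (hat x hx).ne' p σ, hat x hx]
    _ = #{y ∈ s.erase p | p < y ∧ P y} := card_filter_comp_of_bijOn hσ fun y => p < y ∧ P y
    _ = #{y ∈ {y ∈ s | P y} | p < y} := by
        congr 1
        grind

/- Greedy choice: the letters of `t` are served in increasing order, and `q` receives the
admissible element having exactly `c q` admissible elements above it among those still free. -/
theorem exists_bijOn_card_crossing_eq (R : α → α → Prop) [∀ x y, Decidable (R x y)] (c : α → ℕ)
    (t : Finset α) : ∀ s : Finset α, #s = #t →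
      (∀ q ∈ t, c q + #{x ∈ t | x < q} < #{y ∈ s | R y q}) →
      ∃ σ : α → α, Set.BijOn σ t s ∧ (∀ q ∈ t, R (σ q) q) ∧
        ∀ q ∈ t, #{x ∈ t | q < x ∧ σ q < σ x ∧ R (σ x) q} = c q := by
  induction t using Finset.induction_on_min with
  | empty =>
    intro s hs _
    obtain rfl : s = ∅ := by simpa using hs
    exact ⟨id, by simp, by simp, by simp⟩
  | insert a t hat ih =>
    intro s hs hc
    have ha : a ∉ t := fun h => lt_irrefl a (hat a h)
    obtain ⟨p, hp, hpc⟩ := exists_mem_card_filter_gt_eq {y ∈ s | R y a} (k := c a)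
      (by have := hc a (mem_insert_self a t); omega)
    obtain ⟨hps, hpa⟩ := mem_filter.1 hp
    have hroom : ∀ q ∈ t, c q + #{x ∈ t | x < q} < #{y ∈ s.erase p | R y q} := fun q hq => by
      have hcq := hc q (mem_insert_of_mem hq)
      rw [filter_insert, if_pos (hat q hq), card_insert_of_notMem (by simp [ha])] at hcq
      have := pred_card_le_card_erase (s := {y ∈ s | R y q}) (a := p)
      rw [filter_erase]
      omega
    obtain ⟨σ, hσ, hR, hcount⟩ := ih (s.erase p)
      (by rw [card_erase_of_mem hps, hs, card_insert_of_notMem ha, Nat.add_sub_cancel]) hroom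
    have hupd : ∀ q ∈ t, Function.update σ a p q = σ q := fun q hq =>
      Function.update_of_ne (hat q hq).ne' p σ
    refine ⟨Function.update σ a p, ?_, ?_, ?_⟩
    · have hins := (hσ.congr fun q hq => (hupd q hq).symm).insert (a := a) (by simp)
      rwa [Function.update_self, ← coe_insert, ← coe_insert, insert_erase hps] at hins
    · intro q hq
      obtain rfl | hq := mem_insert.1 hq
      · rwa [Function.update_self]
      · rw [hupd q hq]
        exact hR q hq
    · intro q hq
      obtain rfl | hq := mem_insert.1 hq
      · rw [Function.update_self]
        exact (card_filter_insert_update_of_bijOn hat hσ fun y => R y q).trans hpc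
      · rw [← hcount q hq, filter_insert, if_neg fun h => h.1.not_gt (hat q hq)]
        congr 1
        refine filter_congr fun x hx => ?_
        rw [hupd x hx, hupd q hq]

theorem exists_bijOn_card_crossing_eq_dual (R : α → α → Prop) [∀ x y, Decidable (R x y)] (c : α → ℕ)
    (s t : Finset α) (hs : #s = #t) (hc : ∀ q ∈ t, c q + #{x ∈ t | q < x} < #{y ∈ s | R y q}) :
    ∃ σ : α → α, Set.BijOn σ t s ∧ (∀ q ∈ t, R (σ q) q) ∧
      ∀ q ∈ t, #{x ∈ t | x < q ∧ σ x < σ q ∧ R (σ x) q} = c q := by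
  let _ : ∀ x y : αᵒᵈ, Decidable (R x y) := ‹∀ x y : α, Decidable (R x y)›
  obtain ⟨σ, hσ, hR, hcount⟩ := exists_bijOn_card_crossing_eq (α := αᵒᵈ) R c t s hs
    fun q hq => Eq.trans_lt rfl (hc q hq)
  exact ⟨σ, hσ, hR, fun q hq => Eq.trans rfl (hcount q hq)⟩

end Matching

section Crossings

variable {α : Type*} [LinearOrder α] [Fintype α]

/-- The number of crossings of `τ` indexed by a value `v`: a weak excedance value is crossed by
larger weak excedance values (as in `C_EE`), any other value by smaller ones (as in `C_NN`). -/
def crossings (τ : Equiv.Perm α) (v : α) : ℕ :=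
  #{x | v < x ∧ τ.symm v < τ.symm x ∧ τ.symm x ≤ v} +
    #{x | x < v ∧ τ.symm x < τ.symm v ∧ v < τ.symm x}

theorem crossings_of_symm_le {τ : Equiv.Perm α} {v : α} (hv : τ.symm v ≤ v) :
    crossings τ v = #{x | v < x ∧ τ.symm v < τ.symm x ∧ τ.symm x ≤ v} := by
  rw [crossings, Nat.add_eq_left, card_eq_zero, filter_eq_empty_iff]
  exact fun x _ h => (h.2.1.trans_le hv).not_gt h.2.2

theorem crossings_of_lt_symm {τ : Equiv.Perm α} {v : α} (hv : v < τ.symm v) :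
    crossings τ v = #{x | x < v ∧ τ.symm x < τ.symm v ∧ v < τ.symm x} := by
  rw [crossings, Nat.add_eq_right, card_eq_zero, filter_eq_empty_iff]
  exact fun x _ h => (hv.trans h.2.1).not_ge h.2.2

theorem sum_crossings_eq_card_add_card (τ : Equiv.Perm α) :
    ∑ v, crossings τ v =
      #{p : α × α | p.2 < p.1 ∧ p.1 ≤ τ p.2 ∧ τ p.2 < τ p.1} +
        #{p : α × α | τ p.1 < τ p.2 ∧ τ p.2 < p.1 ∧ p.1 < p.2} := by
  simp only [crossings, sum_add_distrib, card_filter, Fintype.sum_prod_type_right]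
  congr 1
  all_goals
    rw [← Equiv.sum_comp τ]
    refine sum_congr rfl fun j _ => ?_
    rw [← Equiv.sum_comp τ]
    refine sum_congr rfl fun i _ => ?_
    simp only [Equiv.symm_apply_apply]
    congr 1
    grind

theorem card_filter_lt_compl_add_card (s : Finset α) (v : α) :
    #{x ∈ sᶜ | v < x} + #s = #{x | v < x} + #{x ∈ s | x ≤ v} := by
  have hs := card_filter_add_card_filter_not (s := s) (· ≤ v)
  have hlt : #{x ∈ s | v < x} + #{x ∈ sᶜ | v < x} = #{x | v < x} := by
    rw [← card_union_of_disjoint (disjoint_filter_filter disjoint_compl_right), ← filter_union,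
      union_compl]
  simp only [not_le] at hs
  omega

theorem exists_perm_crossings_eq (E F : Finset α) (hcard : #E = #F) (c : α → ℕ)
    (hc : ∀ v, c v + #{x ∈ F | x < v} < #{x ∈ E | x ≤ v}) :
    ∃ τ : Equiv.Perm α, (∀ v, τ.symm v ≤ v ↔ v ∈ F) ∧ (∀ i, i ≤ τ i ↔ i ∈ E) ∧
      crossings τ = c := by
  obtain ⟨σ₁, hσ₁, hle, hup⟩ := exists_bijOn_card_crossing_eq (· ≤ ·) c F E hcard fun v _ => hc v
  have hc' : ∀ v ∈ Fᶜ, c v + #{x ∈ Fᶜ | v < x} < #{x ∈ Eᶜ | v < x} := fun v hv => by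
    have hlt : ({x ∈ F | x ≤ v} : Finset α) = {x ∈ F | x < v} := filter_congr fun x hx =>
      ⟨fun h => h.lt_of_ne fun hxv => mem_compl.1 hv (hxv ▸ hx), le_of_lt⟩
    have hF := card_filter_lt_compl_add_card F v
    have hE := card_filter_lt_compl_add_card E v
    have := hc v
    rw [hlt] at hF
    omega
  obtain ⟨σ₂, hσ₂, hlt, hlow⟩ := exists_bijOn_card_crossing_eq_dual (fun y q => q < y) c Eᶜ Fᶜ
    (by simp only [card_compl, hcard]) hc'
  obtain ⟨σ, hσF, hσF'⟩ := exists_perm_eqOn_of_bijOn_compl hσ₁ (by simpa using hσ₂)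
  have hleF : ∀ v, σ v ≤ v ↔ v ∈ F := fun v => by
    by_cases hv : v ∈ F
    · simpa [hv, hσF v hv] using hle v hv
    · simpa [hv, hσF' v hv] using hlt v (by simpa using hv)
  have hmemE : ∀ v, σ v ∈ E ↔ v ∈ F := fun v => by
    by_cases hv : v ∈ F
    · simpa [hv, hσF v hv] using hσ₁.mapsTo hv
    · simpa [hv, hσF' v hv] using hσ₂.mapsTo (by simpa using hv)
  refine ⟨σ.symm, hleF, fun i => ?_, funext fun v => ?_⟩
  · simpa using (hleF (σ.symm i)).trans (hmemE (σ.symm i)).symm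
  · simp only [mem_coe] at hσF hσF'
    by_cases hv : v ∈ F
    · rw [crossings_of_symm_le ((hleF v).2 hv), ← hup v hv]
      congr 1
      ext x
      have := hleF x
      simp only [Equiv.symm_symm, mem_filter]
      grind
    · rw [crossings_of_lt_symm (not_le.1 ((hleF v).not.2 hv)), ← hlow v (by simpa using hv)]
      congr 1
      ext x
      have := hleF x
      simp only [Equiv.symm_symm, mem_filter, mem_compl]
      grind

end Crossings

section RaiseLower

variable {α : Type*} [LinearOrder α] [BoundedOrder α]

/-- The set attached to a set `s` of descent bottoms: all elements of `s` are raised by one, and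
the least letter is adjoined. -/
def raise [SuccOrder α] (s : Finset α) : Finset α :=
  insert ⊥ (s.image Order.succ)

/-- The set attached to a set `s` of descent tops: all elements of `s` are lowered by one, and
the greatest letter is adjoined. -/
def lower [PredOrder α] (s : Finset α) : Finset α :=
  insert ⊤ (s.image Order.pred)

theorem card_filter_raise_le [SuccOrder α] {s : Finset α} (hs : ⊤ ∉ s) (v : α) :
    #{x ∈ raise s | x ≤ v} = #{b ∈ s | b < v} + 1 := by
  have hmax : ∀ b ∈ s, ¬ IsMax b := fun b hb h => hs (h.eq_top ▸ hb)
  rw [raise, filter_insert, if_pos bot_le, filter_image, card_insert_of_notMem, card_image_of_injOn]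
  · congr 2
    exact filter_congr fun b hb => Order.succ_le_iff_of_not_isMax (hmax b hb)
  · intro b hb b' hb' h
    exact (Order.succ_eq_succ_iff_of_not_isMax (hmax b (mem_filter.1 hb).1)
      (hmax b' (mem_filter.1 hb').1)).1 h
  · simp only [mem_image, mem_filter, not_exists, not_and]
    exact fun b hb h => ((Order.lt_succ_of_not_isMax (hmax b hb.1)).trans_eq h).not_ge bot_le

theorem card_raise [SuccOrder α] {s : Finset α} (hs : ⊤ ∉ s) : #(raise s) = #s + 1 := by
  have h := card_filter_raise_le hs ⊤
  rwa [filter_true_of_mem fun x _ => (le_top : x ≤ ⊤),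
    filter_true_of_mem fun b hb => lt_top_iff_ne_top.2 fun h => hs (h ▸ hb)] at h

theorem succ_mem_raise [SuccOrder α] {s : Finset α} (hs : ⊤ ∉ s) {b : α} (hb : b ≠ ⊤) :
    Order.succ b ∈ raise s ↔ b ∈ s := by
  have hb' : ¬ IsMax b := mt IsMax.eq_top hb
  simp only [raise, mem_insert, mem_image]
  refine ⟨?_, fun h => .inr ⟨b, h, rfl⟩⟩
  rintro (h | ⟨b', h, hbb'⟩)
  · exact absurd h ((bot_le (a := b)).trans_lt (Order.lt_succ_of_not_isMax hb')).ne'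
  · have hmax : ¬ IsMax b' := fun h' => hs (h'.eq_top ▸ h)
    rwa [← (Order.succ_eq_succ_iff_of_not_isMax hmax hb').1 hbb']

theorem raise_injOn [SuccOrder α] : Set.InjOn (raise (α := α)) {s | ⊤ ∉ s} := by
  intro s hs t ht hst
  ext b
  by_cases hb : b = ⊤
  · exact hb ▸ iff_of_false hs ht
  · rw [← succ_mem_raise hs hb, hst, succ_mem_raise ht hb]

theorem card_lower [PredOrder α] {s : Finset α} (hs : ⊥ ∉ s) : #(lower s) = #s + 1 :=
  card_raise (α := αᵒᵈ) hs

theorem lower_injOn [PredOrder α] : Set.InjOn (lower (α := α)) {s | ⊥ ∉ s} :=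
  raise_injOn (α := αᵒᵈ)

theorem card_filter_lower_ge [PredOrder α] {s : Finset α} (hs : ⊥ ∉ s) (v : α) :
    #{x ∈ lower s | v ≤ x} = #{b ∈ s | v < b} + 1 :=
  (card_filter_raise_le (α := αᵒᵈ) hs v :)

theorem card_filter_lower_lt [PredOrder α] {s : Finset α} (hs : ⊥ ∉ s) (v : α) :
    #{x ∈ lower s | x < v} = #{t ∈ s | t ≤ v} := by
  have h₁ := card_filter_add_card_filter_not (s := lower s) (v ≤ ·)
  have h₂ := card_filter_add_card_filter_not (s := s) (v < ·)
  simp only [not_le, not_lt] at h₁ h₂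
  have := card_filter_lower_ge hs v
  have := card_lower hs
  omega

end RaiseLower

section Words

variable {m : ℕ} (π : Equiv.Perm (Fin (m + 1)))

/-- The descents of the word `π 0, …, π m`, as elements `i : Fin m` standing for the pair of
positions `i`, `i + 1`. -/
def descentPositions : Finset (Fin m) := {i | π i.succ < π i.castSucc}

/-- The set of descent bottoms of a word. -/
def descentBottoms : Finset (Fin (m + 1)) := (descentPositions π).image fun i => π i.succ

/-- The set of descent tops of a word. -/
def descentTops : Finset (Fin (m + 1)) := (descentPositions π).image fun i => π i.castSucc

/-- The right embracing number of the letter `v`: the number of descents to the right of `v` whose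
bottom is smaller and whose top is larger than `v`. -/
def embracing (v : Fin (m + 1)) : ℕ :=
  #{i : Fin m | π.symm v < i.castSucc ∧ π i.succ < v ∧ v < π i.castSucc}

/-- The number of descents from position `j` on with bottom smaller than `v` and top at least `v`.
As a function of `j` it locates the letters smaller than `v` relative to `v`. -/
def straddlingFrom (v j : Fin (m + 1)) : ℕ :=
  #{i : Fin m | j ≤ i.castSucc ∧ π i.succ < v ∧ v ≤ π i.castSucc}

theorem card_filter_descentBottoms (P : Fin (m + 1) → Prop) [DecidablePred P] :
    #{b ∈ descentBottoms π | P b} = #{i ∈ descentPositions π | P (π i.succ)} :=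
  (card_filter_comp_of_bijOn (by
    rw [descentBottoms, coe_image]
    exact (π.injective.comp (Fin.succ_injective m)).injOn.bijOn_image) P).symm

theorem card_filter_descentTops (P : Fin (m + 1) → Prop) [DecidablePred P] :
    #{t ∈ descentTops π | P t} = #{i ∈ descentPositions π | P (π i.castSucc)} :=
  (card_filter_comp_of_bijOn (by
    rw [descentTops, coe_image]
    exact (π.injective.comp (Fin.castSucc_injective m)).injOn.bijOn_image) P).symm

theorem card_descentBottoms : #(descentBottoms π) = #(descentPositions π) := by
  simpa using card_filter_descentBottoms π fun _ => True

theorem card_descentTops : #(descentTops π) = #(descentPositions π) := by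
  simpa using card_filter_descentTops π fun _ => True

theorem last_notMem_descentBottoms : Fin.last m ∉ descentBottoms π := by
  simp only [descentBottoms, descentPositions, mem_image, mem_filter_univ, not_exists, not_and]
  exact fun i hi h => (Fin.le_last _).not_gt (h ▸ hi)

theorem zero_notMem_descentTops : 0 ∉ descentTops π := by
  simp only [descentTops, descentPositions, mem_image, mem_filter_univ, not_exists, not_and]
  exact fun i hi h => (Fin.zero_le _).not_gt (h ▸ hi)

theorem straddlingFrom_antitone (v : Fin (m + 1)) : Antitone (straddlingFrom π v) :=
  fun _ _ hjk => card_le_card <| monotone_filter_right _ fun _ _ h => ⟨hjk.trans h.1, h.2⟩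

theorem straddlingFrom_symm_self (v : Fin (m + 1)) :
    straddlingFrom π v (π.symm v) = embracing π v + #{t ∈ descentTops π | t = v} := by
  rw [card_filter_descentTops, descentPositions, filter_filter, straddlingFrom, embracing,
    ← card_union_of_disjoint (disjoint_filter.2 fun i _ h h' => h.2.2.ne' h'.2), ← filter_or]
  congr 1
  refine filter_congr fun i _ => ?_
  have : π i.castSucc = v ↔ i.castSucc = π.symm v := π.eq_symm_apply.symm
  grind

theorem straddlingFrom_add_card (v j : Fin (m + 1)) :
    straddlingFrom π v j + #{t ∈ descentTops π | t < v ∧ j ≤ π.symm t} =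
      #{b ∈ descentBottoms π | b < v ∧ j < π.symm b} := by
  simp only [card_filter_descentTops, card_filter_descentBottoms, descentPositions, filter_filter,
    straddlingFrom, Equiv.symm_apply_apply, ← Fin.le_castSucc_iff]
  rw [← card_union_of_disjoint (disjoint_filter.2 fun i _ h h' => h.2.2.not_gt h'.2.1),
    ← filter_or]
  congr 1
  refine filter_congr fun i _ => ?_
  grind

theorem embracing_add_card_le (v : Fin (m + 1)) :
    embracing π v + #{t ∈ descentTops π | t ≤ v} ≤ #{b ∈ descentBottoms π | b < v} := by
  have htop : #{t ∈ descentTops π | t ≤ v} =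
      #{t ∈ descentTops π | t = v} + #{t ∈ descentTops π | t < v ∧ 0 ≤ π.symm t} := by
    rw [← card_union_of_disjoint (disjoint_filter.2 fun i _ h h' => h'.1.ne h), ← filter_or]
    congr 1
    refine filter_congr fun i _ => ?_
    rw [le_iff_eq_or_lt]
    simp
  calc embracing π v + #{t ∈ descentTops π | t ≤ v}
      = straddlingFrom π v (π.symm v) + #{t ∈ descentTops π | t < v ∧ 0 ≤ π.symm t} := by
        rw [straddlingFrom_symm_self, htop, add_assoc]
    _ ≤ straddlingFrom π v 0 + #{t ∈ descentTops π | t < v ∧ 0 ≤ π.symm t} := by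
        gcongr
        exact straddlingFrom_antitone π v (Fin.zero_le _)
    _ = #{b ∈ descentBottoms π | b < v ∧ 0 < π.symm b} := straddlingFrom_add_card π v 0
    _ ≤ #{b ∈ descentBottoms π | b < v} := card_le_card <| monotone_filter_right _ fun _ _ h => h.1

theorem exists_castSucc_and_not_succ {P : Fin (m + 1) → Prop} {j k : Fin (m + 1)} (hjk : j < k)
    (hj : P j) (hk : ¬ P k) :
    ∃ i : Fin m, j ≤ i.castSucc ∧ i.succ ≤ k ∧ P i.castSucc ∧ ¬ P i.succ := by
  induction k using Fin.induction with
  | zero => exact absurd hjk (Fin.not_lt_zero j)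
  | succ i ih =>
    have hji := Fin.le_castSucc_iff.2 hjk
    by_cases hi : P i.castSucc
    · exact ⟨i, hji, le_rfl, hi, hk⟩
    · obtain ⟨i', hj', hk', h⟩ := ih (hji.lt_of_ne fun h => hi (h ▸ hj)) hi
      exact ⟨i', hj', hk'.trans i.castSucc_lt_succ.le, h⟩

theorem symm_lt_symm_iff_straddlingFrom_lt {v x : Fin (m + 1)} (hxv : x < v) :
    π.symm v < π.symm x ↔
      straddlingFrom π v (π.symm x) < straddlingFrom π v (π.symm v) := by
  refine ⟨fun h => ?_, (straddlingFrom_antitone π v).reflect_lt⟩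
  obtain ⟨i, hvi, hix, htop, hbot⟩ :=
    exists_castSucc_and_not_succ (P := (v ≤ π ·)) h (by simp) (by simpa using hxv)
  refine card_lt_card <| (ssubset_iff_of_subset <|
    monotone_filter_right _ fun _ _ h' => ⟨h.le.trans h'.1, h'.2⟩).2 ⟨i, ?_, ?_⟩
  · simpa using ⟨hvi, not_le.1 hbot, htop⟩
  · simp [Fin.castSucc_lt_iff_succ_le.2 hix]

theorem lt_iff_lt_of_lt_imp {α β : Type*} [LinearOrder α] [LinearOrder β] {f g : α → β}
    (hf : f.Injective) (hg : g.Injective) {x y : α} (hxy : x < y → (f y < f x ↔ g y < g x))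
    (hyx : y < x → (f x < f y ↔ g x < g y)) : f x < f y ↔ g x < g y := by
  rcases lt_trichotomy x y with h | rfl | h
  · have hfxy := hf.ne h.ne
    have hgxy := hg.ne h.ne
    rw [← not_iff_not, not_lt, not_lt, hfxy.symm.le_iff_lt, hgxy.symm.le_iff_lt, hxy h]
  · simp
  · exact hyx h

variable {π} {π' : Equiv.Perm (Fin (m + 1))}

theorem symm_lt_symm_iff_of_embracing_eq (hbot : descentBottoms π = descentBottoms π')
    (htop : descentTops π = descentTops π') (hemb : embracing π = embracing π')
    (v : Fin (m + 1)) : ∀ x < v, (π.symm v < π.symm x ↔ π'.symm v < π'.symm x) := by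
  induction v using WellFoundedLT.induction with | _ v ih
  have hlt : ∀ x < v, ∀ y < v, (π.symm x < π.symm y ↔ π'.symm x < π'.symm y) :=
    fun x hx y hy => lt_iff_lt_of_lt_imp π.symm.injective π'.symm.injective (ih y hy x) (ih x hx y)
  intro x hx
  rw [symm_lt_symm_iff_straddlingFrom_lt π hx, symm_lt_symm_iff_straddlingFrom_lt π' hx,
    straddlingFrom_symm_self, straddlingFrom_symm_self, hemb, htop]
  suffices straddlingFrom π v (π.symm x) = straddlingFrom π' v (π'.symm x) by rw [this]
  have h := straddlingFrom_add_card π v (π.symm x)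
  have h' := straddlingFrom_add_card π' v (π'.symm x)
  rw [hbot, htop] at h
  have ht : #{t ∈ descentTops π' | t < v ∧ π.symm x ≤ π.symm t} =
      #{t ∈ descentTops π' | t < v ∧ π'.symm x ≤ π'.symm t} := congrArg card <|
    filter_congr fun t _ => and_congr_right fun htv => by simp only [← not_lt, hlt t htv x hx]
  have hb : #{b ∈ descentBottoms π' | b < v ∧ π.symm x < π.symm b} =
      #{b ∈ descentBottoms π' | b < v ∧ π'.symm x < π'.symm b} := congrArg card <|
    filter_congr fun b _ => and_congr_right (hlt x hx b)
  omega

theorem eq_of_embracing_eq (hbot : descentBottoms π = descentBottoms π')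
    (htop : descentTops π = descentTops π') (hemb : embracing π = embracing π') : π = π' := by
  have hlt := symm_lt_symm_iff_of_embracing_eq hbot htop hemb
  have hmono : StrictMono (π.trans π'.symm) := fun i j hij =>
    (lt_iff_lt_of_lt_imp π.symm.injective π'.symm.injective (hlt (π j) (π i))
      (hlt (π i) (π j))).1 (by simpa using hij)
  ext1 i
  exact π'.symm_apply_eq.1 hmono.apply_eq

end Words

section Main

variable {m : ℕ} (π : Equiv.Perm (Fin (m + 1)))

theorem P2d31_eq_sum_embracing : P2d31 π = ∑ v, embracing π v := by
  have hlast : ∀ i : Fin (m + 1), ¬ (i < Fin.last m ∧ ∃ h : (Fin.last m).val + 1 < m + 1,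
      π ⟨(Fin.last m).val + 1, h⟩ < π i ∧ π i < π (Fin.last m)) := fun i h =>
    h.2.choose.ne rfl
  have hcast : ∀ (i : Fin (m + 1)) (j : Fin m), (i < j.castSucc ∧
      ∃ h : j.castSucc.val + 1 < m + 1, π ⟨j.castSucc.val + 1, h⟩ < π i ∧ π i < π j.castSucc) ↔
      i < j.castSucc ∧ π j.succ < π i ∧ π i < π j.castSucc := fun i j =>
    and_congr_right' ⟨fun ⟨_, h⟩ => h, fun h => ⟨Nat.succ_lt_succ j.isLt, h⟩⟩
  rw [← Equiv.sum_comp π, P2d31, card_filter, Fintype.sum_prod_type]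
  refine sum_congr rfl fun i _ => ?_
  rw [Fin.sum_univ_castSucc, if_neg (hlast i), add_zero, embracing, card_filter]
  simp only [hcast, Equiv.symm_apply_apply]

theorem CEE_add_CNN_eq_sum_crossings {n : ℕ} (τ : Equiv.Perm (Fin n)) :
    CEE τ + CNN τ = ∑ v, crossings τ v :=
  (sum_crossings_eq_card_add_card τ).symm

theorem descents_eq_image : descents π = (descentPositions π).image Fin.castSucc := by
  ext i
  cases i using Fin.lastCases with
  | last => simp [descents]
  | cast i =>
    simp only [descents, descentPositions, mem_filter_univ, mem_image, Fin.castSucc_inj,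
      exists_eq_right]
    exact ⟨fun ⟨_, h⟩ => h, fun h => ⟨Nat.succ_lt_succ i.isLt, h⟩⟩

theorem desbotsSet_eq_image : desbotsSet π = (descentBottoms π).image fun b => b.val + 1 := by
  rw [desbotsSet, descents_eq_image, descentBottoms, image_image, image_image]
  exact image_congr fun i _ => dif_pos (Nat.succ_lt_succ i.isLt)

theorem destopsSet_eq_image : destopsSet π = (descentTops π).image fun t => t.val + 1 := by
  rw [destopsSet, descents_eq_image, descentTops, image_image, image_image]
  rfl

theorem image_val_add_one_raise {s : Finset (Fin (m + 1))} (hs : Fin.last m ∉ s) :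
    (raise s).image (fun b => b.val + 1) =
      insert 1 ((s.image fun b => b.val + 1).image (· + 1)) := by
  rw [raise, image_insert, image_image, image_image]
  congr 1
  refine image_congr fun b hb => ?_
  obtain ⟨b, rfl⟩ := Fin.exists_castSucc_eq.2 (ne_of_mem_of_not_mem hb hs)
  simp

theorem image_val_add_one_lower {s : Finset (Fin (m + 1))} (hs : 0 ∉ s) :
    (lower s).image (fun t => t.val + 1) =
      insert (m + 1) ((s.image fun t => t.val + 1).image (· - 1)) := by
  rw [lower, image_insert, image_image, image_image]
  congr 1
  refine image_congr fun t ht => ?_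
  obtain ⟨t, rfl⟩ := Fin.exists_succ_eq.2 (ne_of_mem_of_not_mem ht hs)
  simp

theorem exists_perm_crossings_eq_embracing :
    ∃ τ : Equiv.Perm (Fin (m + 1)), wexB τ = raise (descentBottoms π) ∧
      (wexB τ).image τ = lower (descentTops π) ∧ crossings τ = embracing π := by
  have hB := last_notMem_descentBottoms π
  have hT := zero_notMem_descentTops π
  have hcard : #(raise (descentBottoms π)) = #(lower (descentTops π)) := by
    rw [card_raise hB, card_lower hT, card_descentBottoms, card_descentTops]
  obtain ⟨τ, htops, hbots, hcross⟩ := exists_perm_crossings_eq _ _ hcard (embracing π) fun v => by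
    rw [card_filter_raise_le hB, card_filter_lower_lt hT]
    exact Nat.lt_succ_of_le (embracing_add_card_le π v)
  refine ⟨τ, ?_, ?_, hcross⟩
  · ext i
    rw [wexB, mem_filter_univ, hbots]
  · ext v
    rw [← htops, ← Equiv.coe_toEmbedding, ← map_eq_image, mem_map_equiv, wexB, mem_filter_univ,
      Equiv.apply_symm_apply]

end Main

theorem exists_Psi (n : ℕ) (hn : 1 ≤ n) :
    ∃ Ψ : Equiv.Perm (Fin n) → Equiv.Perm (Fin n), Function.Bijective Ψ ∧
      ∀ π : Equiv.Perm (Fin n),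
        wexbotsSet (Ψ π) = insert 1 ((desbotsSet π).image (· + 1)) ∧
        wextopsSet (Ψ π) = insert n ((destopsSet π).image (· - 1)) ∧
        CEE (Ψ π) + CNN (Ψ π) = P2d31 π := by
  obtain ⟨m, rfl⟩ := Nat.exists_eq_add_of_le' hn
  choose Ψ hbots htops hcross using exists_perm_crossings_eq_embracing (m := m)
  refine ⟨Ψ, Finite.injective_iff_bijective.1 fun π π' h => ?_, fun π => ⟨?_, ?_, ?_⟩⟩
  · apply eq_of_embracing_eq
    · refine raise_injOn (last_notMem_descentBottoms π) (last_notMem_descentBottoms π') ?_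
      rw [← hbots, h, hbots]
    · refine lower_injOn (zero_notMem_descentTops π) (zero_notMem_descentTops π') ?_
      rw [← htops, h, htops]
    · rw [← hcross, h, hcross]
  · rw [desbotsSet_eq_image, ← image_val_add_one_raise (last_notMem_descentBottoms π), ← hbots,
      wexbotsSet]
  · rw [destopsSet_eq_image, ← image_val_add_one_lower (zero_notMem_descentTops π), ← htops,
      image_image]
    rfl
  · rw [CEE_add_CNN_eq_sum_crossings, hcross, P2d31_eq_sum_embracing]
end

section
/- The number of permutations of {1,...,n} with k-1 descents and m occurrences of the generalized pattern (2-31) equals the coefficient of q^m in q^{-k²} · Σ_{i=0}^{k-1} (-1)^i [k-i]_q^n q^{ki} (C(n,i) q^{k-i} + C(n,i-1)), where [j]_q = 1 + q + ... + q^{j-1}. -/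
open Finset


/-!
Build permutations by appending a last letter. Appending `a` after a last letter `l` creates
nothing if `l < a`, and one descent together with `l - a` occurrences of (2-31) if `l ≥ a`. So
the generating functions `G_n(a)` of permutations of `n + 1` letters ending in `a`, with `q`
marking (2-31) and `y` marking descents, satisfy
`G_{n+1}(a) = ∑_{l < a} G_n(l) + y ∑_{l ≥ a} q^{l-a} G_n(l)`.

If `B - M = 1 - r` and `y (1 - r) = r (q B - M)`, the geometric mode `(B - M) B^l M^{n-l}` solves
this recursion up to the boundary terms `-M^{n+1} + r q^{n+1-a} B^{n+1}`. The parameters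
`r = q^j` and `r = y q^{-j}` have the same `B = [j]_q (1 - y q^{-j})`, while `r = q^j` and
`r = y q^{-j-1}` have the same `M = q [j]_q (1 - y q^{-j-1})`. Hence in the chain of modes with
weights `±w_j`, where `w_j = y^j q^{-j(j+1)}`, all boundary terms cancel, and modulo a power of
`y` the chain is finite. Summing over the last letter gives
`∑_σ q^{(2-31) σ} y^{des σ} = ∑_j (w_j - w_{j+1}) ([j+1]_q (1 - y q^{-j-1}))^n`,
and the coefficients of powers of `y` are read off by the binomial theorem.
-/

section LastLetterModes

variable {S : Type*} [CommRing S]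

/-- The `q`-integer `[j]_q`. -/
def qInt (q : S) (j : ℕ) : S := ∑ t ∈ range j, q ^ t

lemma qInt_succ (q : S) (j : ℕ) : qInt q (j + 1) = q * qInt q j + 1 := geom_sum_succ

lemma one_sub_mul_qInt (q : S) (j : ℕ) : (1 - q) * qInt q j = 1 - q ^ j := mul_neg_geom_sum q j

/-- The transfer operator for appending a last letter to a permutation of `n + 1` letters: the
value at `a` collects the weights of appending the letter `a` (counted from `0`), given the
generating functions `f l` of the permutations ending in `l`. The inner index is `i = l - a`. -/
def lastLetterStep (q y : S) (n : ℕ) : Module.End S (ℕ → S) where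
  toFun f a := ∑ l ∈ range a, f l + y * ∑ i ∈ range (n + 1 - a), q ^ i * f (a + i)
  map_add' f g := by
    ext a
    simp only [Pi.add_apply, mul_add, sum_add_distrib]
    ring
  map_smul' c f := by
    ext a
    simp only [Pi.smul_apply, smul_eq_mul, mul_left_comm _ c, ← mul_sum, RingHom.id_apply, mul_add]

lemma lastLetterStep_apply (q y : S) (n : ℕ) (f : ℕ → S) (a : ℕ) :
    lastLetterStep q y n f a =
      ∑ l ∈ range a, f l + y * ∑ i ∈ range (n + 1 - a), q ^ i * f (a + i) := rfl

/-- The geometric mode of level `n`: every letter below the last letter `l` contributes `B`, every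
letter above it contributes `M`. The factor `B - M` makes its partial sums telescope. -/
def lastLetterMode (B M : S) (n l : ℕ) : S := (B - M) * (B ^ l * M ^ (n - l))

lemma sum_range_lastLetterMode (B M : S) {n a : ℕ} (ha : a ≤ n + 1) :
    ∑ l ∈ range a, lastLetterMode B M n l = B ^ a * M ^ (n + 1 - a) - M ^ (n + 1) := by
  have total := geom_sum₂_mul B M (n + 1)
  rw [← sum_range_add_sum_Ico _ ha] at total
  have upper := mul_geom_sum₂_Ico B M ha
  simp only [Nat.add_sub_cancel] at total upper
  simp only [lastLetterMode, ← mul_sum]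
  linear_combination total - upper

lemma mul_sum_range_pow_mul_lastLetterMode {q y r B M : S}
    (hy : y * (B - M) = r * (q * B - M)) (n a : ℕ) :
    y * ∑ i ∈ range (n + 1 - a), q ^ i * lastLetterMode B M n (a + i) =
      r * B ^ a * ((q * B) ^ (n + 1 - a) - M ^ (n + 1 - a)) := by
  have as_geom : ∀ i ∈ range (n + 1 - a), q ^ i * lastLetterMode B M n (a + i) =
      (B - M) * B ^ a * ((q * B) ^ i * M ^ (n + 1 - a - 1 - i)) := by
    intro i _
    rw [lastLetterMode, show n - (a + i) = n + 1 - a - 1 - i by omega, pow_add, mul_pow]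
    ring
  rw [sum_congr rfl as_geom, ← mul_sum, ← geom_sum₂_mul (q * B) M]
  linear_combination
    B ^ a * (∑ i ∈ range (n + 1 - a), (q * B) ^ i * M ^ (n + 1 - a - 1 - i)) * hy

lemma lastLetterStep_mode {q y r B M : S} (hr : B - M = 1 - r)
    (hy : y * (B - M) = r * (q * B - M)) {n a : ℕ} (ha : a ≤ n + 1) :
    lastLetterStep q y n (lastLetterMode B M n) a =
      lastLetterMode B M (n + 1) a - M ^ (n + 1) + r * q ^ (n + 1 - a) * B ^ (n + 1) := by
  have hB : B ^ (n + 1) = B ^ a * B ^ (n + 1 - a) := by rw [← pow_add, Nat.add_sub_of_le ha]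
  rw [lastLetterStep_apply, sum_range_lastLetterMode B M ha,
    mul_sum_range_pow_mul_lastLetterMode hy, lastLetterMode, hr, hB, mul_pow]
  ring

/-- The base `B_j = [j]_q (1 - y q⁻ʲ)` of a geometric mode, carried by the letters below the last
one. Here `p` stands for `q⁻¹`. -/
def belowRate (q p y : S) (j : ℕ) : S := qInt q j * (1 - y * p ^ j)

/-- The base `M_j = q [j]_q (1 - y q⁻ʲ⁻¹)` of a geometric mode, carried by the letters above the
last one. Here `p` stands for `q⁻¹`. -/
def aboveRate (q p y : S) (j : ℕ) : S := q * qInt q j * (1 - y * p ^ (j + 1))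

/-- The weight `w_j = y ^ j q ^ (-j (j + 1))` that makes the boundary terms of consecutive modes
cancel. Here `p` stands for `q⁻¹`. -/
def modeWeight (p y : S) (j : ℕ) : S := y ^ j * p ^ (j * (j + 1))

lemma aboveRate_zero (q p y : S) : aboveRate q p y 0 = 0 := by
  simp [aboveRate, qInt]

lemma modeWeight_zero (p y : S) : modeWeight p y 0 = 1 := by
  simp [modeWeight]

lemma modeWeight_eq_zero (p : S) {y : S} {N : ℕ} (hy : y ^ N = 0) : modeWeight p y N = 0 := by
  rw [modeWeight, hy, zero_mul]

lemma belowRate_succ_sub_aboveRate (q p y : S) (j : ℕ) :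
    belowRate q p y (j + 1) - aboveRate q p y j = 1 - y * p ^ (j + 1) := by
  rw [belowRate, aboveRate, qInt_succ]
  ring

variable {q p : S} (y : S)

lemma belowRate_sub_aboveRate (hpq : p * q = 1) (j : ℕ) :
    belowRate q p y j - aboveRate q p y j = 1 - q ^ j := by
  rw [belowRate, aboveRate]
  linear_combination one_sub_mul_qInt q j + qInt q j * y * p ^ j * hpq

lemma mul_belowRate_succ_sub_aboveRate (hpq : p * q = 1) (j : ℕ) :
    y * (belowRate q p y (j + 1) - aboveRate q p y j) =
      y * p ^ (j + 1) * (q * belowRate q p y (j + 1) - aboveRate q p y j) := by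
  have hdiff : qInt q (j + 1) - qInt q j = q ^ j := by
    linear_combination qInt_succ q j - one_sub_mul_qInt q j
  rw [belowRate_succ_sub_aboveRate, belowRate, aboveRate]
  linear_combination -(y * (1 - y * p ^ (j + 1))) *
    (pow_mul_pow_eq_one (j + 1) hpq + p ^ (j + 1) * q * hdiff)

lemma mul_belowRate_sub_aboveRate (hpq : p * q = 1) (j : ℕ) :
    y * (belowRate q p y j - aboveRate q p y j) =
      q ^ j * (q * belowRate q p y j - aboveRate q p y j) := by
  rw [belowRate_sub_aboveRate y hpq, ← one_sub_mul_qInt, belowRate, aboveRate]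
  linear_combination y * qInt q j * ((q - 1) * pow_mul_pow_eq_one j hpq
    - p ^ j * q ^ j * hpq)

lemma modeWeight_mul_eq (hpq : p * q = 1) (j : ℕ) :
    modeWeight p y j * (y * p ^ (j + 1)) = modeWeight p y (j + 1) * q ^ (j + 1) := by
  rw [modeWeight, modeWeight]
  linear_combination -(y ^ (j + 1) * p ^ ((j + 1) * (j + 1))) *
    pow_mul_pow_eq_one (j + 1) hpq

/-- The weighted difference of the modes with parameters `r = y q⁻ʲ⁻¹` and `r = q ^ (j + 1)`. They
share the base `B_{j + 1}`, so the boundary terms of `lastLetterStep_mode` in `B` cancel. -/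
def pairedMode (q p y : S) (j n : ℕ) : ℕ → S :=
  modeWeight p y j • lastLetterMode (belowRate q p y (j + 1)) (aboveRate q p y j) n -
    modeWeight p y (j + 1) •
      lastLetterMode (belowRate q p y (j + 1)) (aboveRate q p y (j + 1)) n

lemma lastLetterStep_pairedMode (hpq : p * q = 1) (j : ℕ) {n a : ℕ} (ha : a ≤ n + 1) :
    lastLetterStep q y n (pairedMode q p y j n) a =
      pairedMode q p y j (n + 1) a -
        (modeWeight p y j * aboveRate q p y j ^ (n + 1) -
          modeWeight p y (j + 1) * aboveRate q p y (j + 1) ^ (n + 1)) := by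
  have h₁ := lastLetterStep_mode (belowRate_succ_sub_aboveRate q p y j)
    (mul_belowRate_succ_sub_aboveRate y hpq j) ha
  have h₂ := lastLetterStep_mode (belowRate_sub_aboveRate y hpq (j + 1))
    (mul_belowRate_sub_aboveRate y hpq (j + 1)) ha
  simp only [pairedMode, map_sub, map_smul, Pi.sub_apply, Pi.smul_apply, smul_eq_mul, h₁, h₂]
  linear_combination
    q ^ (n + 1 - a) * belowRate q p y (j + 1) ^ (n + 1) * modeWeight_mul_eq y hpq j

lemma pairedMode_zero_zero (hpq : p * q = 1) (j : ℕ) :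
    pairedMode q p y j 0 0 = modeWeight p y j - modeWeight p y (j + 1) := by
  simp only [pairedMode, lastLetterMode, Pi.sub_apply, Pi.smul_apply, smul_eq_mul, pow_zero,
    Nat.sub_self, mul_one, belowRate_succ_sub_aboveRate, belowRate_sub_aboveRate y hpq]
  linear_combination -modeWeight_mul_eq y hpq j

lemma sum_range_pairedMode (q p y : S) (j n : ℕ) :
    ∑ l ∈ range (n + 1), pairedMode q p y j n l =
      (modeWeight p y j - modeWeight p y (j + 1)) * belowRate q p y (j + 1) ^ (n + 1) -
        (modeWeight p y j * aboveRate q p y j ^ (n + 1) -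
          modeWeight p y (j + 1) * aboveRate q p y (j + 1) ^ (n + 1)) := by
  simp only [pairedMode, Pi.sub_apply, Pi.smul_apply, smul_eq_mul, sum_sub_distrib, ← mul_sum,
    sum_range_lastLetterMode _ _ le_rfl, Nat.sub_self, pow_zero, mul_one]
  ring

lemma sum_range_modeWeight_mul_aboveRate_pow_sub (q p : S) {y : S} {N : ℕ} (hy : y ^ N = 0)
    (n : ℕ) :
    ∑ j ∈ range N, (modeWeight p y j * aboveRate q p y j ^ (n + 1) -
      modeWeight p y (j + 1) * aboveRate q p y (j + 1) ^ (n + 1)) = 0 := by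
  rw [sum_range_sub' fun j => modeWeight p y j * aboveRate q p y j ^ (n + 1), aboveRate_zero,
    modeWeight_eq_zero p hy]
  ring

lemma sum_range_modeWeight_sub (p : S) {y : S} {N : ℕ} (hy : y ^ N = 0) :
    ∑ j ∈ range N, (modeWeight p y j - modeWeight p y (j + 1)) = 1 := by
  rw [sum_range_sub', modeWeight_zero, modeWeight_eq_zero p hy, sub_zero]

end LastLetterModes

section AppendLast

lemma des_eq_sum {n : ℕ} (π : Equiv.Perm (Fin (n + 1))) :
    des π = ∑ i : Fin n, if π i.succ < π i.castSucc then 1 else 0 := by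
  rw [des, descents, card_filter, Fin.sum_univ_castSucc]
  simp [Fin.succ]

lemma P2d31_eq_sum {n : ℕ} (π : Equiv.Perm (Fin (n + 1))) :
    P2d31 π = ∑ j : Fin n, ∑ i : Fin (n + 1),
      if i < j.castSucc ∧ π j.succ < π i ∧ π i < π j.castSucc then 1 else 0 := by
  rw [P2d31, card_filter, ← univ_product_univ, sum_product_right, Fin.sum_univ_castSucc]
  simp [Fin.succ]

/-- The permutation of `n + 2` letters obtained from `σ` by appending `a` as its last letter and
shifting up the letters of `σ` that are at least `a`. -/
def appendLast {n : ℕ} (a : Fin (n + 2)) (σ : Equiv.Perm (Fin (n + 1))) :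
    Equiv.Perm (Fin (n + 2)) :=
  (finSuccEquiv' (Fin.last (n + 1))).trans (σ.optionCongr.trans (finSuccEquiv' a).symm)

@[simp]
lemma appendLast_last {n : ℕ} (a : Fin (n + 2)) (σ : Equiv.Perm (Fin (n + 1))) :
    appendLast a σ (Fin.last (n + 1)) = a := by
  simp [appendLast]

@[simp]
lemma appendLast_castSucc {n : ℕ} (a : Fin (n + 2)) (σ : Equiv.Perm (Fin (n + 1)))
    (i : Fin (n + 1)) : appendLast a σ i.castSucc = a.succAbove (σ i) := by
  have hi : finSuccEquiv' (Fin.last (n + 1)) i.castSucc = some i := by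
    rw [← Fin.succAbove_last_apply, finSuccEquiv'_succAbove]
  simp [appendLast, hi]

lemma appendLast_injective {n : ℕ} (a : Fin (n + 2)) : Function.Injective (appendLast a) := by
  intro σ τ h
  ext i
  have hi := congrArg (fun π => π i.castSucc) h
  simp only [appendLast_castSucc] at hi
  rw [Fin.succAbove_right_injective hi]

lemma appendLast_uncurry_bijective (n : ℕ) :
    Function.Bijective (Function.uncurry (appendLast (n := n))) := by
  rw [Fintype.bijective_iff_injective_and_card]
  refine ⟨?_, by simp [Fintype.card_perm, Nat.factorial_succ]⟩
  rintro ⟨a, σ⟩ ⟨b, τ⟩ h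
  obtain rfl : a = b := by
    simpa using congrArg (fun π => π (Fin.last (n + 1))) h
  exact congrArg (Prod.mk a) (appendLast_injective a h)

lemma des_appendLast {n : ℕ} (a : Fin (n + 2)) (σ : Equiv.Perm (Fin (n + 1))) :
    des (appendLast a σ) = des σ + if a.val ≤ (σ (Fin.last n)).val then 1 else 0 := by
  simp only [des_eq_sum, Fin.sum_univ_castSucc, Fin.succ_castSucc, Fin.succ_last,
    appendLast_last, appendLast_castSucc, Fin.succAbove_lt_succAbove_iff,
    Fin.lt_succAbove_iff_le_castSucc, Fin.le_def, Fin.val_castSucc]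

lemma sum_ite_perm_mem_Ico {n : ℕ} (σ : Equiv.Perm (Fin n)) (a : ℕ) {c : ℕ} (hc : c ≤ n) :
    (∑ i, if a ≤ (σ i).val ∧ (σ i).val < c then 1 else 0) = c - a := by
  rw [Equiv.sum_comp σ (fun v => if a ≤ v.val ∧ v.val < c then 1 else 0),
    Fin.sum_univ_eq_sum_range (fun v => if a ≤ v ∧ v < c then 1 else 0), ← card_filter,
    ← Nat.card_Ico]
  congr 1
  ext v
  simp only [mem_filter, mem_range, mem_Ico]
  omega

lemma P2d31_appendLast {n : ℕ} (a : Fin (n + 2)) (σ : Equiv.Perm (Fin (n + 1))) :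
    P2d31 (appendLast a σ) = P2d31 σ + ((σ (Fin.last n)).val - a.val) := by
  have last_pos : ∀ i : Fin (n + 1), i.castSucc < (Fin.last n).castSucc ∧ a ≤ (σ i).castSucc ∧
      σ i < σ (Fin.last n) ↔ a.val ≤ (σ i).val ∧ (σ i).val < (σ (Fin.last n)).val := by
    intro i
    simp only [Fin.le_def, Fin.lt_def, Fin.val_castSucc, Fin.val_last, and_iff_right_iff_imp]
    rintro ⟨-, hlt⟩
    have : i ≠ Fin.last n := fun h => by simp [h] at hlt
    exact Fin.val_lt_last this
  rw [P2d31_eq_sum, P2d31_eq_sum, Fin.sum_univ_castSucc]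
  congr 1
  · refine sum_congr rfl fun j _ => ?_
    rw [Fin.sum_univ_castSucc]
    simp only [Fin.succ_castSucc, appendLast_castSucc, Fin.succAbove_lt_succAbove_iff,
      Fin.castSucc_lt_castSucc_iff, (Fin.le_last _).not_gt, false_and, if_false, add_zero]
  · rw [Fin.sum_univ_castSucc, if_neg fun h => (Fin.le_last _).not_gt h.1, add_zero]
    simp only [Fin.succ_last, appendLast_last, appendLast_castSucc,
      Fin.lt_succAbove_iff_le_castSucc, Fin.succAbove_lt_succAbove_iff, last_pos]
    exact sum_ite_perm_mem_Ico σ a (σ (Fin.last n)).isLt.le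

variable {S : Type*} [CommRing S]

/-- The joint generating function of (2-31)-occurrences (marked by `q`) and descents (marked by
`y`) over the permutations of `n + 1` letters with last letter `a`, letters being counted from
`0`. -/
def lastLetterGF (q y : S) (n a : ℕ) : S :=
  ∑ σ : Equiv.Perm (Fin (n + 1)) with (σ (Fin.last n)).val = a, q ^ P2d31 σ * y ^ des σ

lemma sum_range_mul_lastLetterGF (q y : S) (n : ℕ) (c : ℕ → S) :
    ∑ l ∈ range (n + 1), c l * lastLetterGF q y n l =
      ∑ σ : Equiv.Perm (Fin (n + 1)),
        c (σ (Fin.last n)).val * (q ^ P2d31 σ * y ^ des σ) := by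
  rw [← sum_fiberwise_of_maps_to (t := range (n + 1))
    (g := fun σ : Equiv.Perm (Fin (n + 1)) => (σ (Fin.last n)).val)
    fun σ _ => mem_range.2 (σ (Fin.last n)).isLt]
  refine sum_congr rfl fun l _ => ?_
  rw [lastLetterGF, mul_sum]
  exact sum_congr rfl fun σ hσ => by rw [(mem_filter.1 hσ).2]

lemma lastLetterGF_succ_eq_sum_appendLast (q y : S) {n : ℕ} (a : Fin (n + 2)) :
    lastLetterGF q y (n + 1) a =
      ∑ σ, q ^ P2d31 (appendLast a σ) * y ^ des (appendLast a σ) := by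
  rw [lastLetterGF, sum_filter, ← (appendLast_uncurry_bijective n).sum_comp,
    Fintype.sum_prod_type_right]
  simp [Fin.val_inj]

lemma weight_appendLast (q y : S) {n : ℕ} (a : Fin (n + 2)) (σ : Equiv.Perm (Fin (n + 1))) :
    q ^ P2d31 (appendLast a σ) * y ^ des (appendLast a σ) =
      (if (σ (Fin.last n)).val < a.val then 1 else y * q ^ ((σ (Fin.last n)).val - a.val)) *
        (q ^ P2d31 σ * y ^ des σ) := by
  rw [P2d31_appendLast, des_appendLast]
  rcases lt_or_ge (σ (Fin.last n)).val a.val with hlt | hle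
  · rw [if_neg hlt.not_ge, if_pos hlt, Nat.sub_eq_zero_of_le hlt.le, add_zero, add_zero, one_mul]
  · rw [if_pos hle, if_neg hle.not_gt]
    ring

lemma lastLetterGF_succ (q y : S) {n a : ℕ} (ha : a ≤ n + 1) :
    lastLetterGF q y (n + 1) a = lastLetterStep q y n (lastLetterGF q y n) a := by
  have split_range : range (n + 1) = range (a + (n + 1 - a)) := by rw [Nat.add_sub_of_le ha]
  lift a to Fin (n + 2) using Nat.lt_succ_of_le ha
  simp only [lastLetterGF_succ_eq_sum_appendLast, lastLetterStep_apply, weight_appendLast]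
  rw [← sum_range_mul_lastLetterGF q y n fun l => if l < a.val then 1 else y * q ^ (l - a.val),
    split_range, sum_range_add, mul_sum]
  congr 1
  · exact sum_congr rfl fun l hl => by rw [if_pos (mem_range.1 hl), one_mul]
  · exact sum_congr rfl fun i _ => by simp [mul_assoc]

lemma lastLetterGF_zero_zero (q y : S) : lastLetterGF q y 0 0 = 1 := by
  simp [lastLetterGF, P2d31_eq_sum, des_eq_sum]

theorem lastLetterGF_eq_sum_pairedMode {q p y : S} (hpq : p * q = 1) {N : ℕ} (hy : y ^ N = 0)
    {n a : ℕ} (ha : a ≤ n) :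
    lastLetterGF q y n a = ∑ j ∈ range N, pairedMode q p y j n a := by
  induction n generalizing a with
  | zero =>
    obtain rfl := Nat.le_zero.1 ha
    simp only [lastLetterGF_zero_zero, pairedMode_zero_zero y hpq, sum_range_modeWeight_sub p hy]
  | succ n ih =>
    have step_congr : lastLetterStep q y n (lastLetterGF q y n) a =
        lastLetterStep q y n (∑ j ∈ range N, pairedMode q p y j n) a := by
      simp only [lastLetterStep_apply, Finset.sum_apply]
      congr 1
      · exact sum_congr rfl fun l hl => ih (by have := mem_range.1 hl; omega)
      · congr 1
        exact sum_congr rfl fun i hi => by rw [ih (by have := mem_range.1 hi; omega)]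
    rw [lastLetterGF_succ q y ha, step_congr, map_sum, Finset.sum_apply]
    simp only [lastLetterStep_pairedMode y hpq _ ha]
    rw [sum_sub_distrib, sum_range_modeWeight_mul_aboveRate_pow_sub q p hy, sub_zero]

theorem sum_perm_pow_P2d31_mul_pow_des {q p y : S} (hpq : p * q = 1) {N : ℕ} (hy : y ^ N = 0)
    (n : ℕ) :
    ∑ σ : Equiv.Perm (Fin n), q ^ P2d31 σ * y ^ des σ =
      ∑ j ∈ range N, (modeWeight p y j - modeWeight p y (j + 1)) * belowRate q p y (j + 1) ^ n := by
  cases n with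
  | zero => simpa [P2d31, des, descents] using (sum_range_modeWeight_sub p hy).symm
  | succ n =>
    calc ∑ σ : Equiv.Perm (Fin (n + 1)), q ^ P2d31 σ * y ^ des σ
        = ∑ l ∈ range (n + 1), lastLetterGF q y n l := by
          simpa using (sum_range_mul_lastLetterGF q y n 1).symm
      _ = ∑ l ∈ range (n + 1), ∑ j ∈ range N, pairedMode q p y j n l :=
          sum_congr rfl fun l hl =>
            lastLetterGF_eq_sum_pairedMode hpq hy (Nat.le_of_lt_succ (mem_range.1 hl))
      _ = _ := by
          rw [sum_comm]
          simp only [sum_range_pairedMode]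
          rw [sum_sub_distrib, sum_range_modeWeight_mul_aboveRate_pow_sub q p hy, sub_zero]

end AppendLast

section Coefficients

open Polynomial

variable {R : Type*} [CommRing R]

lemma coeff_one_sub_X_mul_C_pow (c : R) (n i : ℕ) :
    ((1 - X * C c : R[X]) ^ n).coeff i = (-c) ^ i * n.choose i := by
  have as_comp : (1 - X * C c : R[X]) ^ n = ((1 + X) ^ n : R[X]).comp (C (-c) * X) := by
    simp only [pow_comp, add_comp, one_comp, X_comp, C_neg]
    ring
  rw [as_comp, comp_C_mul_X_coeff, coeff_one_add_X_pow, mul_comm]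

lemma coeff_one_sub_mul_one_sub_pow (c : R) (n i : ℕ) :
    ((1 - X * C (c ^ 2)) * (1 - X * C c) ^ n : R[X]).coeff i =
      (-c) ^ i * (n.choose i + c * if i = 0 then 0 else (n.choose (i - 1) : R)) := by
  rw [sub_mul, one_mul, mul_assoc, coeff_sub, coeff_one_sub_X_mul_C_pow]
  cases i with
  | zero => simp
  | succ i =>
    rw [coeff_X_mul, coeff_C_mul, coeff_one_sub_X_mul_C_pow, if_neg i.succ_ne_zero,
      Nat.add_sub_cancel]
    ring

lemma modeWeight_sub_mul_belowRate_pow (q p : R) (n j : ℕ) :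
    (modeWeight (C p) X j - modeWeight (C p) X (j + 1)) * belowRate (C q) (C p) X (j + 1) ^ n =
      C (p ^ (j * (j + 1)) * qInt q (j + 1) ^ n) *
        ((1 - X * C ((p ^ (j + 1)) ^ 2)) * (1 - X * C (p ^ (j + 1))) ^ n) * X ^ j := by
  simp only [modeWeight, belowRate, qInt, map_mul, map_pow, map_sum, mul_pow]
  ring

lemma coeff_modeWeight_sub_mul_belowRate_pow {q p : R} (hpq : p * q = 1) (n j i : ℕ) :
    ((modeWeight (C p) X j - modeWeight (C p) X (j + 1)) *
        belowRate (C q) (C p) X (j + 1) ^ n : R[X]).coeff (i + j) * q ^ (i + j + 1) ^ 2 =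
      (-1) ^ i * qInt q (j + 1) ^ n * q ^ ((i + j + 1) * i) *
        (n.choose i * q ^ (j + 1) + if i = 0 then 0 else (n.choose (i - 1) : R)) := by
  rw [modeWeight_sub_mul_belowRate_pow, coeff_mul_X_pow, coeff_C_mul,
    coeff_one_sub_mul_one_sub_pow, neg_pow (p ^ (j + 1))]
  have hj : p ^ (j + 1) * q ^ (j + 1) = 1 := pow_mul_pow_eq_one (j + 1) hpq
  have hji : (p ^ (j + 1)) ^ (j + i) * (q ^ (j + 1)) ^ (j + i) = 1 := pow_mul_pow_eq_one _ hj
  generalize (if i = 0 then 0 else (n.choose (i - 1) : R)) = c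
  calc _ = (-1) ^ i * qInt q (j + 1) ^ n * q ^ ((i + j + 1) * i) *
        ((p ^ (j + 1)) ^ (j + i) * (q ^ (j + 1)) ^ (j + i)) *
        (n.choose i * q ^ (j + 1) + p ^ (j + 1) * q ^ (j + 1) * c) := by ring
    _ = _ := by rw [hj, hji, one_mul, mul_one]

lemma map_modeWeight {S : Type*} [CommRing S] (f : R →+* S) (p y : R) (j : ℕ) :
    f (modeWeight p y j) = modeWeight (f p) (f y) j := by
  simp only [modeWeight, map_mul, map_pow]

lemma map_belowRate {S : Type*} [CommRing S] (f : R →+* S) (q p y : R) (j : ℕ) :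
    f (belowRate q p y j) = belowRate (f q) (f p) (f y) j := by
  simp only [belowRate, qInt, map_mul, map_sum, map_sub, map_one, map_pow]

lemma sum_pow_P2d31_eq_coeff {q p : R} (hpq : p * q = 1) (n k : ℕ) :
    (∑ σ : Equiv.Perm (Fin n), if des σ = k then q ^ P2d31 σ else 0) =
      ∑ j ∈ range (k + 1), ((modeWeight (C p) X j - modeWeight (C p) X (j + 1)) *
        belowRate (C q) (C p) X (j + 1) ^ n : R[X]).coeff k := by
  -- Modulo `X ^ (k + 1)` the descent variable `X` is nilpotent, so the chain of modes ends.
  let I : Ideal R[X] := Ideal.span {X ^ (k + 1)}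
  let f := Ideal.Quotient.mk I
  have truncated := sum_perm_pow_P2d31_mul_pow_des
    (q := f (C q)) (p := f (C p)) (y := f X) (N := k + 1)
    (by rw [← map_mul, ← C_mul, hpq, C_1, map_one])
    (by rw [← map_pow, Ideal.Quotient.eq_zero_iff_mem]
        exact Ideal.mem_span_singleton_self _) n
  simp only [← map_modeWeight, ← map_belowRate, ← map_pow, ← map_mul, ← map_sub,
    ← map_sum] at truncated
  have coeff_eq := X_pow_dvd_iff.1
    (Ideal.mem_span_singleton.1 (Ideal.Quotient.eq.1 truncated)) k k.lt_succ_self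
  rw [coeff_sub, sub_eq_zero, finsetSum_coeff, finsetSum_coeff] at coeff_eq
  rw [← coeff_eq]
  refine sum_congr rfl fun σ _ => ?_
  rw [coeff_C_mul, coeff_X_pow, mul_ite, mul_one, mul_zero]
  simp only [eq_comm]

theorem sum_pow_P2d31_mul_pow_sq {q p : R} (hpq : p * q = 1) (n k : ℕ) :
    (∑ σ : Equiv.Perm (Fin n), if des σ = k then q ^ P2d31 σ else 0) * q ^ (k + 1) ^ 2 =
      ∑ i ∈ range (k + 1), (-1) ^ i * qInt q (k + 1 - i) ^ n * q ^ ((k + 1) * i) *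
        (n.choose i * q ^ (k + 1 - i) + if i = 0 then 0 else (n.choose (i - 1) : R)) := by
  rw [sum_pow_P2d31_eq_coeff hpq, sum_mul, ← sum_range_reflect]
  refine sum_congr rfl fun i hi => ?_
  have hik : i ≤ k := Nat.le_of_lt_succ (mem_range.1 hi)
  obtain ⟨j, rfl⟩ := Nat.exists_eq_add_of_le hik
  simp only [Nat.add_sub_cancel, Nat.add_sub_cancel_left, show i + j + 1 - i = j + 1 by omega]
  exact coeff_modeWeight_sub_mul_belowRate_pow hpq n j i

theorem polynomial_sum_X_pow_P2d31_mul_X_pow_sq (n k : ℕ) :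
    (∑ σ : Equiv.Perm (Fin n), if des σ = k then X ^ P2d31 σ else 0) * X ^ (k + 1) ^ 2 =
      ∑ i ∈ range (k + 1), (-1 : ℤ[X]) ^ i * (∑ t ∈ range (k + 1 - i), X ^ t) ^ n *
        X ^ ((k + 1) * i) * ((n.choose i : ℤ[X]) * X ^ (k + 1 - i) +
          C (if i = 0 then 0 else (n.choose (i - 1) : ℤ))) := by
  have hT : (LaurentPolynomial.T (-1) : LaurentPolynomial ℤ) * LaurentPolynomial.T 1 = 1 := by
    rw [← LaurentPolynomial.T_add, neg_add_cancel, LaurentPolynomial.T_zero]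
  apply toLaurent_injective
  simpa [qInt, apply_ite] using sum_pow_P2d31_mul_pow_sq hT n k

end Coefficients

theorem count_des_2d31_eq_coeff (n k m : ℕ) (hk : 1 ≤ k) :
    ((Finset.univ.filter
        (fun π : Equiv.Perm (Fin n) => des π = k - 1 ∧ P2d31 π = m)).card : ℤ) =
    (∑ i ∈ Finset.range k,
        (-1 : Polynomial ℤ) ^ i * (∑ t ∈ Finset.range (k - i), Polynomial.X ^ t) ^ n *
          Polynomial.X ^ (k * i) *
          ((n.choose i : Polynomial ℤ) * Polynomial.X ^ (k - i) +
            Polynomial.C (if i = 0 then 0 else (n.choose (i - 1) : ℤ)))).coeff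
      (m + k ^ 2) := by
  obtain ⟨k, rfl⟩ := Nat.exists_eq_add_of_le' hk
  rw [← polynomial_sum_X_pow_P2d31_mul_X_pow_sq, Polynomial.coeff_mul_X_pow,
    Polynomial.finsetSum_coeff, Finset.card_filter, Nat.cast_sum]
  refine sum_congr rfl fun σ _ => ?_
  by_cases h : des σ = k <;> simp [h, Polynomial.coeff_X_pow, eq_comm]
end

section
/- The polynomial F_λ(p,q) counting valid 0/1-fillings of the Young diagram of λ = (λ_1,...,λ_k) (with λ_k ≥ 1) by number of 0's (exponent of p) and number of 1's (exponent of q) satisfies the recurrence F_λ(p,q) = p^{k-1} q · F_{(λ_1-1,...,λ_k-1)}(p,q) + q · F_{(λ_1,...,λ_{k-1},λ_k-1)}(p,q) + p^{λ_k} · F_{(λ_1,...,λ_{k-1})}(p,q), where terms whose shape has a zero part or fails to be a partition are interpreted appropriately. -/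
open Finset


/-!
The recurrence holds for an arbitrary finite set `D` of boxes. Let `c` be a box of `D` that is both
the lowest of its column and the last of its row, and suppose that every column meeting the row of
`c` has another box.

* If `c` holds a `0`, its column has a `1` above `c`, so there is no `1` to the left of `c`: the row
  of `c` is zero, and deleting it leaves a valid filling.
* If `c` holds the only `1` of its column, then that column does not constrain the other boxes, and
  it can be deleted.
* If `c` holds a `1` and its column has another one, then the box `c` alone can be deleted, since no
  other box has `c` above it or to its left.
-/

section CellSets

variable {α β R : Type*} [PartialOrder α] [PartialOrder β]

/-- `S` is the set of `1`'s of a valid `0/1`-filling of the finite set `D` of boxes, where `(i, j)`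
is the box in row `i` and column `j`. -/
structure IsValidFilling (D S : Finset (α × β)) : Prop where
  subset : S ⊆ D
  exists_mem_col : ∀ i j, (i, j) ∈ D → ∃ i', (i', j) ∈ S
  left_notMem : ∀ i j, (i, j) ∈ D → (i, j) ∉ S →
    ∀ i' < i, (i', j) ∈ S → ∀ j' < j, (i, j') ∉ S

open Classical in
/-- The valid fillings of `D`, each given by its set of `1`'s. -/
noncomputable def validFillings (D : Finset (α × β)) : Finset (Finset (α × β)) :=
  {S ∈ D.powerset | IsValidFilling D S}

/-- The analogue of `F_λ(p, q)` for an arbitrary finite set `D` of boxes, over any commutative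
semiring. -/
noncomputable def fillingSum [DecidableEq α] [DecidableEq β] [CommSemiring R]
    (D : Finset (α × β)) (p q : R) : R :=
  ∑ S ∈ validFillings D, p ^ #(D \ S) * q ^ #S

/-- `c` is a box of `D` that is lowest in its column and last in its row. -/
structure IsCornerBox (D : Finset (α × β)) (c : α × β) : Prop where
  mem : c ∈ D
  row_le : ∀ i, (i, c.2) ∈ D → i ≤ c.1
  col_le : ∀ j, (c.1, j) ∈ D → j ≤ c.2

@[simp]
lemma mem_validFillings {D S : Finset (α × β)} : S ∈ validFillings D ↔ IsValidFilling D S := by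
  simpa [validFillings] using fun h : IsValidFilling D S => h.subset

variable {D S T : Finset (α × β)} {c : α × β}

lemma IsCornerBox.above_ne (hc : IsCornerBox D c) {i i' : α} {j : β} (hij : (i, j) ∈ D)
    (hi : i' < i) : (i', j) ≠ c := by
  rintro rfl
  exact hi.not_ge (hc.row_le i hij)

lemma IsCornerBox.left_ne (hc : IsCornerBox D c) {i : α} {j j' : β} (hij : (i, j) ∈ D)
    (hj : j' < j) : (i, j') ≠ c := by
  rintro rfl
  exact hj.not_ge (hc.col_le j hij)

variable [DecidableEq α]

lemma IsCornerBox.isValidFilling_and_notMem_iff (hc : IsCornerBox D c)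
    (hrow : ∀ j, (c.1, j) ∈ D → ∃ i ≠ c.1, (i, j) ∈ D) :
    IsValidFilling D S ∧ c ∉ S ↔ IsValidFilling {x ∈ D | x.1 ≠ c.1} S := by
  constructor
  · rintro ⟨hS, hcS⟩
    have row_zero : ∀ j, (c.1, j) ∉ S := by
      intro j hj
      obtain ⟨i, hi⟩ := hS.exists_mem_col c.1 c.2 hc.mem
      have hi_lt : i < c.1 :=
        (hc.row_le i (hS.subset hi)).lt_of_ne (by rintro rfl; exact hcS hi)
      have hj_lt : j < c.2 :=
        (hc.col_le j (hS.subset hj)).lt_of_ne (by rintro rfl; exact hcS hj)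
      exact hS.left_notMem c.1 c.2 hc.mem hcS i hi_lt hi j hj_lt hj
    refine ⟨fun x hx => mem_filter.2 ⟨hS.subset hx, fun h => row_zero x.2 (h ▸ hx)⟩, ?_, ?_⟩
    · exact fun i j hij => hS.exists_mem_col i j (mem_filter.1 hij).1
    · exact fun i j hij => hS.left_notMem i j (mem_filter.1 hij).1
  · intro hS
    have row_zero : ∀ j, (c.1, j) ∉ S := fun j hj => (mem_filter.1 (hS.subset hj)).2 rfl
    refine ⟨⟨hS.subset.trans (filter_subset _ _), ?_, ?_⟩, row_zero c.2⟩
    · intro i j hij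
      obtain ⟨i', hi', hij'⟩ : ∃ i' ≠ c.1, (i', j) ∈ D := by
        by_cases hi : i = c.1
        · exact hrow j (hi ▸ hij)
        · exact ⟨i, hi, hij⟩
      exact hS.exists_mem_col i' j (mem_filter.2 ⟨hij', hi'⟩)
    · intro i j hij hijS i' hi' hi'S j' hj' hj'S
      have hi : i ≠ c.1 := fun h => row_zero j' (h ▸ hj'S)
      exact hS.left_notMem i j (mem_filter.2 ⟨hij, hi⟩) hijS i' hi' hi'S j' hj' hj'S

variable [DecidableEq β]

lemma IsCornerBox.isValidFilling_insert_and_exists_iff (hc : IsCornerBox D c) (hcT : c ∉ T)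
    (hcol : ∃ i ≠ c.1, (i, c.2) ∈ D) :
    IsValidFilling D (insert c T) ∧ (∃ i, (i, c.2) ∈ T) ↔ IsValidFilling (D.erase c) T := by
  constructor
  · rintro ⟨hT, i₀, hi₀⟩
    refine ⟨subset_erase.2 ⟨(subset_insert c T).trans hT.subset, hcT⟩, ?_, ?_⟩
    · intro i j hij
      obtain ⟨i', hi'⟩ := hT.exists_mem_col i j (mem_of_mem_erase hij)
      rcases mem_insert.1 hi' with rfl | hi'
      · exact ⟨i₀, hi₀⟩
      · exact ⟨i', hi'⟩
    · intro i j hij hijT i' hi' hi'T j' hj' hj'T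
      obtain ⟨hne, hijD⟩ := mem_erase.1 hij
      exact hT.left_notMem i j hijD (by simp [hne, hijT]) i' hi' (mem_insert_of_mem hi'T)
        j' hj' (mem_insert_of_mem hj'T)
  · intro hT
    refine ⟨⟨insert_subset hc.mem (hT.subset.trans (erase_subset c D)), ?_, ?_⟩, ?_⟩
    · intro i j hij
      by_cases h : (i, j) = c
      · exact ⟨i, h ▸ mem_insert_self c T⟩
      · obtain ⟨i', hi'⟩ := hT.exists_mem_col i j (mem_erase.2 ⟨h, hij⟩)
        exact ⟨i', mem_insert_of_mem hi'⟩
    · intro i j hij hijT i' hi' hi'T j' hj' hj'T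
      rw [mem_insert, not_or] at hijT
      exact hT.left_notMem i j (mem_erase.2 ⟨hijT.1, hij⟩) hijT.2
        i' hi' (mem_of_mem_insert_of_ne hi'T (hc.above_ne hij hi'))
        j' hj' (mem_of_mem_insert_of_ne hj'T (hc.left_ne hij hj'))
    · obtain ⟨i, hi, hiD⟩ := hcol
      exact hT.exists_mem_col i c.2 (mem_erase.2 ⟨fun h => hi (congrArg Prod.fst h), hiD⟩)

lemma IsCornerBox.isValidFilling_insert_and_forall_iff (hc : IsCornerBox D c) :
    IsValidFilling D (insert c T) ∧ (∀ i, (i, c.2) ∉ T) ↔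
      IsValidFilling {x ∈ D | x.2 ≠ c.2} T := by
  constructor
  · rintro ⟨hT, hcol⟩
    refine ⟨fun x hx => mem_filter.2 ⟨hT.subset (mem_insert_of_mem hx), ?_⟩, ?_, ?_⟩
    · exact fun h => hcol x.1 (h ▸ hx)
    · intro i j hij
      obtain ⟨hijD, hj⟩ := mem_filter.1 hij
      obtain ⟨i', hi'⟩ := hT.exists_mem_col i j hijD
      exact ⟨i', mem_of_mem_insert_of_ne hi' fun hc => hj (congrArg (·.2) hc)⟩
    · intro i j hij hijT i' hi' hi'T j' hj' hj'T
      obtain ⟨hijD, hj⟩ := mem_filter.1 hij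
      have hijT' : (i, j) ∉ insert c T :=
        fun h => hijT (mem_of_mem_insert_of_ne h fun hc => hj (congrArg Prod.snd hc))
      exact hT.left_notMem i j hijD hijT' i' hi' (mem_insert_of_mem hi'T)
        j' hj' (mem_insert_of_mem hj'T)
  · intro hT
    have hcol : ∀ i, (i, c.2) ∉ T := fun i hi => (mem_filter.1 (hT.subset hi)).2 rfl
    refine ⟨⟨insert_subset hc.mem (hT.subset.trans (filter_subset _ D)), ?_, ?_⟩, hcol⟩
    · intro i j hij
      by_cases hj : j = c.2
      · exact ⟨c.1, hj ▸ mem_insert_self c T⟩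
      · obtain ⟨i', hi'⟩ := hT.exists_mem_col i j (mem_filter.2 ⟨hij, hj⟩)
        exact ⟨i', mem_insert_of_mem hi'⟩
    · intro i j hij hijT i' hi' hi'T j' hj' hj'T
      have hi'T' : (i', j) ∈ T := mem_of_mem_insert_of_ne hi'T (hc.above_ne hij hi')
      have hj : j ≠ c.2 := fun h => hcol i' (h ▸ hi'T')
      exact hT.left_notMem i j (mem_filter.2 ⟨hij, hj⟩) (fun h => hijT (mem_insert_of_mem h))
        i' hi' hi'T' j' hj' (mem_of_mem_insert_of_ne hj'T (hc.left_ne hij hj'))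

lemma IsCornerBox.filter_notMem_validFillings (hc : IsCornerBox D c)
    (hrow : ∀ j, (c.1, j) ∈ D → ∃ i ≠ c.1, (i, j) ∈ D) :
    {S ∈ validFillings D | c ∉ S} = validFillings {x ∈ D | x.1 ≠ c.1} := by
  ext S
  simp only [mem_filter, mem_validFillings, hc.isValidFilling_and_notMem_iff hrow]

lemma IsCornerBox.filter_mem_validFillings (hc : IsCornerBox D c)
    (hcol : ∃ i ≠ c.1, (i, c.2) ∈ D) :
    {S ∈ validFillings D | c ∈ S} =
      (validFillings {x ∈ D | x.2 ≠ c.2} ∪ validFillings (D.erase c)).image (insert c) := by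
  ext S
  simp only [mem_filter, mem_image, mem_union, mem_validFillings]
  constructor
  · rintro ⟨hS, hcS⟩
    refine ⟨S.erase c, ?_, insert_erase hcS⟩
    rw [← insert_erase hcS] at hS
    rw [← hc.isValidFilling_insert_and_forall_iff,
      ← hc.isValidFilling_insert_and_exists_iff (notMem_erase c S) hcol, ← and_or_left]
    exact ⟨hS, by rw [← not_exists]; exact em' _⟩
  · rintro ⟨T, hT | hT, rfl⟩
    · exact ⟨(hc.isValidFilling_insert_and_forall_iff.2 hT).1, mem_insert_self c T⟩
    · have hcT : c ∉ T := fun h => notMem_erase c D (hT.subset h)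
      exact ⟨((hc.isValidFilling_insert_and_exists_iff hcT hcol).2 hT).1, mem_insert_self c T⟩

lemma disjoint_validFillings_filter_erase (hcol : ∃ i ≠ c.1, (i, c.2) ∈ D) :
    Disjoint (validFillings {x ∈ D | x.2 ≠ c.2}) (validFillings (D.erase c)) := by
  simp only [disjoint_left, mem_validFillings]
  intro S hS hS'
  obtain ⟨i, hi, hiD⟩ := hcol
  obtain ⟨i', hi'⟩ :=
    hS'.exists_mem_col i c.2 (mem_erase.2 ⟨fun h => hi (congrArg Prod.fst h), hiD⟩)
  exact (mem_filter.1 (hS.subset hi')).2 rfl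

lemma sum_validFillings_of_subset [CommSemiring R] {D' : Finset (α × β)} (h : D' ⊆ D) (p q : R) :
    ∑ S ∈ validFillings D', p ^ #(D \ S) * q ^ #S = p ^ #(D \ D') * fillingSum D' p q := by
  rw [fillingSum, mul_sum]
  refine sum_congr rfl fun S hS => ?_
  have hSD' : S ⊆ D' := (mem_validFillings.1 hS).subset
  have hcard : #(D \ S) = #(D \ D') + #(D' \ S) := by
    rw [← sdiff_union_sdiff_cancel h hSD', card_union_of_disjoint]
    exact disjoint_sdiff_self_left.mono_right sdiff_subset
  rw [hcard, pow_add, mul_assoc]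

lemma sum_validFillings_insert_of_subset [CommSemiring R] {D' : Finset (α × β)}
    (h : D' ⊆ D.erase c) (p q : R) :
    ∑ S ∈ validFillings D', p ^ #(D \ insert c S) * q ^ #(insert c S) =
      p ^ #(D.erase c \ D') * q * fillingSum D' p q := by
  rw [mul_right_comm, ← sum_validFillings_of_subset h, sum_mul]
  refine sum_congr rfl fun S hS => ?_
  have hcS : c ∉ S := fun hc => notMem_erase c D (h ((mem_validFillings.1 hS).subset hc))
  rw [sdiff_insert, ← erase_sdiff_comm, card_insert_of_notMem hcS, pow_succ, mul_assoc]

theorem IsCornerBox.fillingSum_recurrence [CommSemiring R] (hc : IsCornerBox D c)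
    (hrow : ∀ j, (c.1, j) ∈ D → ∃ i ≠ c.1, (i, j) ∈ D) (p q : R) :
    fillingSum D p q =
      p ^ #{x ∈ D.erase c | x.2 = c.2} * q * fillingSum {x ∈ D | x.2 ≠ c.2} p q +
      q * fillingSum (D.erase c) p q +
      p ^ #{x ∈ D | x.1 = c.1} * fillingSum {x ∈ D | x.1 ≠ c.1} p q := by
  have hcol : ∃ i ≠ c.1, (i, c.2) ∈ D := hrow c.2 hc.mem
  have hfilter : {x ∈ D | x.2 ≠ c.2} = {x ∈ D.erase c | x.2 ≠ c.2} := by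
    rw [filter_erase, erase_eq_of_notMem (by simp)]
  have hsub : {x ∈ D | x.2 ≠ c.2} ⊆ D.erase c := hfilter ▸ filter_subset _ _
  have hinj : Set.InjOn (insert c : Finset (α × β) → Finset (α × β))
      ↑(validFillings {x ∈ D | x.2 ≠ c.2} ∪ validFillings (D.erase c)) := by
    refine Set.LeftInvOn.injOn (f₁' := (erase · c)) fun S hS => erase_insert fun hcS => ?_
    rw [coe_union, Set.mem_union, mem_coe, mem_coe, mem_validFillings, mem_validFillings] at hS
    exact notMem_erase c D (hS.elim (fun h => hsub (h.subset hcS)) fun h => h.subset hcS)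
  have hcard_col : #(D.erase c \ {x ∈ D | x.2 ≠ c.2}) = #{x ∈ D.erase c | x.2 = c.2} := by
    rw [hfilter, filter_not, Finset.sdiff_sdiff_eq_self (filter_subset _ _)]
  have hcard_row : #(D \ {x ∈ D | x.1 ≠ c.1}) = #{x ∈ D | x.1 = c.1} := by
    rw [filter_not, Finset.sdiff_sdiff_eq_self (filter_subset _ _)]
  rw [fillingSum, ← sum_filter_add_sum_filter_not _ (c ∈ ·), hc.filter_mem_validFillings hcol,
    hc.filter_notMem_validFillings hrow, sum_image hinj,
    sum_union (disjoint_validFillings_filter_erase hcol),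
    sum_validFillings_insert_of_subset hsub, sum_validFillings_insert_of_subset subset_rfl,
    sum_validFillings_of_subset (filter_subset _ D), hcard_col, hcard_row, Finset.sdiff_self,
    card_empty, pow_zero, one_mul]

end CellSets

section Relabel

variable {α β α' β' R : Type*} [PartialOrder α] [PartialOrder β] [PartialOrder α'] [PartialOrder β']
  {D S : Finset (α × β)}

lemma isValidFilling_map (f : α ↪o α') (g : β ↪o β') :
    IsValidFilling (D.map (f.toEmbedding.prodMap g.toEmbedding))
      (S.map (f.toEmbedding.prodMap g.toEmbedding)) ↔ IsValidFilling D S := by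
  have mem_iff : ∀ (A : Finset (α × β)) i j,
      (f i, g j) ∈ A.map (f.toEmbedding.prodMap g.toEmbedding) ↔ (i, j) ∈ A :=
    fun A i j => mem_map' (f.toEmbedding.prodMap g.toEmbedding) (a := (i, j))
  have exists_of_mem : ∀ (A : Finset (α × β)) i' j',
      (i', j') ∈ A.map (f.toEmbedding.prodMap g.toEmbedding) → ∃ i j, f i = i' ∧ g j = j' := by
    intro A i' j' h
    obtain ⟨x, -, hx⟩ := mem_map.1 h
    exact ⟨x.1, x.2, congrArg Prod.fst hx, congrArg Prod.snd hx⟩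
  constructor
  · intro h
    refine ⟨map_subset_map.1 h.subset, ?_, ?_⟩
    · intro i j hij
      obtain ⟨i', hi'⟩ := h.exists_mem_col (f i) (g j) ((mem_iff D i j).2 hij)
      obtain ⟨i₀, -, rfl, -⟩ := exists_of_mem S _ _ hi'
      exact ⟨i₀, (mem_iff S i₀ j).1 hi'⟩
    · intro i j hij hijS i' hi' hi'S j' hj' hj'S
      rw [← mem_iff] at hij hijS hi'S hj'S
      exact h.left_notMem _ _ hij hijS _ (f.lt_iff_lt.2 hi') hi'S _ (g.lt_iff_lt.2 hj') hj'S
  · intro h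
    refine ⟨map_subset_map.2 h.subset, ?_, ?_⟩
    · intro _ _ hij
      obtain ⟨i, j, rfl, rfl⟩ := exists_of_mem D _ _ hij
      obtain ⟨i', hi'⟩ := h.exists_mem_col i j ((mem_iff D i j).1 hij)
      exact ⟨f i', (mem_iff S i' j).2 hi'⟩
    · intro _ _ hij hijS _ hi' hi'S _ hj' hj'S
      obtain ⟨i, j, rfl, rfl⟩ := exists_of_mem D _ _ hij
      obtain ⟨i', -, rfl, -⟩ := exists_of_mem S _ _ hi'S
      obtain ⟨-, j', -, rfl⟩ := exists_of_mem S _ _ hj'S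
      rw [mem_iff] at hij hijS hi'S hj'S
      exact h.left_notMem i j hij hijS i' (f.lt_iff_lt.1 hi') hi'S j' (g.lt_iff_lt.1 hj') hj'S

lemma validFillings_map (f : α ↪o α') (g : β ↪o β') :
    validFillings (D.map (f.toEmbedding.prodMap g.toEmbedding)) =
      (validFillings D).map (mapEmbedding (f.toEmbedding.prodMap g.toEmbedding)).toEmbedding := by
  ext S
  simp only [mem_validFillings, mem_map, RelEmbedding.coe_toEmbedding, mapEmbedding_apply]
  constructor
  · intro hS
    obtain ⟨T, -, rfl⟩ := subset_map_iff.1 hS.subset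
    exact ⟨T, (isValidFilling_map f g).1 hS, rfl⟩
  · rintro ⟨T, hT, rfl⟩
    exact (isValidFilling_map f g).2 hT

lemma fillingSum_map [DecidableEq α] [DecidableEq β] [DecidableEq α'] [DecidableEq β']
    [CommSemiring R]
    (f : α ↪o α') (g : β ↪o β') (D : Finset (α × β)) (p q : R) :
    fillingSum (D.map (f.toEmbedding.prodMap g.toEmbedding)) p q = fillingSum D p q := by
  simp only [fillingSum, validFillings_map, sum_map, RelEmbedding.coe_toEmbedding,
    mapEmbedding_apply, ← Finset.map_sdiff, card_map]

end Relabel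

section RowDiagrams

variable {k : ℕ}

/-- The Young diagram with row lengths `lam`, as a set of boxes; `lam` need not be a partition. -/
def rowDiagram (lam : Fin k → ℕ) : Finset (Fin k × ℕ) :=
  (univ.sigma fun i => range (lam i)).map (Equiv.sigmaEquivProd (Fin k) ℕ).toEmbedding

@[simp]
lemma mem_rowDiagram {lam : Fin k → ℕ} {x : Fin k × ℕ} : x ∈ rowDiagram lam ↔ x.2 < lam x.1 := by
  simp [rowDiagram]

lemma card_filter_rowDiagram (lam : Fin k → ℕ) (P : Fin k × ℕ → Prop) [DecidablePred P] :
    #{x ∈ rowDiagram lam | P x} = ∑ i, #{j : Fin (lam i) | P (i, j)} := by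
  simp only [card_filter, rowDiagram, sum_map, sum_sigma, sum_range]
  rfl

/-- The boxes of `rowDiagram lam` in which the filling `F` has a `1`. -/
def onesOf {lam : Fin k → ℕ} (F : ∀ i : Fin k, Fin (lam i) → Bool) : Finset (Fin k × ℕ) :=
  {x ∈ rowDiagram lam | ∃ h : x.2 < lam x.1, F x.1 ⟨x.2, h⟩ = true}

variable {lam : Fin k → ℕ} (F : ∀ i : Fin k, Fin (lam i) → Bool)

lemma mem_onesOf {i : Fin k} {j : ℕ} :
    (i, j) ∈ onesOf F ↔ ∃ h : j < lam i, F i ⟨j, h⟩ = true := by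
  simp [onesOf]

lemma card_onesOf : #(onesOf F) = fillOnes F := by
  rw [onesOf, card_filter_rowDiagram]
  simp [fillOnes]

lemma card_rowDiagram_sdiff_onesOf : #(rowDiagram lam \ onesOf F) = fillZeros F := by
  rw [onesOf, ← filter_not, card_filter_rowDiagram]
  simp [fillZeros]

lemma isValidFilling_onesOf : IsValidFilling (rowDiagram lam) (onesOf F) ↔ ValidFilling lam F := by
  constructor
  · intro h
    refine ⟨?_, ?_⟩
    · intro i j
      obtain ⟨i', hi'⟩ := h.exists_mem_col i j (mem_rowDiagram.2 j.2)
      exact ⟨i', (mem_onesOf F).1 hi'⟩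
    · rintro i j hF ⟨⟨i', hj, hi', hi'F⟩, j', hj', hj'F⟩
      exact h.left_notMem i j (mem_rowDiagram.2 j.2) (by simp [mem_onesOf, hF])
        i' hi' ((mem_onesOf F).2 ⟨hj, hi'F⟩) j' hj' ((mem_onesOf F).2 ⟨j'.2, hj'F⟩)
  · rintro ⟨hcol, hleft⟩
    refine ⟨filter_subset _ _, ?_, ?_⟩
    · intro i j hij
      obtain ⟨i', hi'⟩ := hcol i ⟨j, mem_rowDiagram.1 hij⟩
      exact ⟨i', (mem_onesOf F).2 hi'⟩
    · intro i j hij hijF i' hi' hi'F j' hj' hj'F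
      obtain ⟨hj, hi'F⟩ := (mem_onesOf F).1 hi'F
      obtain ⟨hj'i, hj'F⟩ := (mem_onesOf F).1 hj'F
      have hF : F i ⟨j, mem_rowDiagram.1 hij⟩ = false :=
        Bool.eq_false_iff.2 fun h => hijF ((mem_onesOf F).2 ⟨_, h⟩)
      exact hleft i ⟨j, _⟩ hF ⟨⟨i', hj, hi', hi'F⟩, ⟨j', hj'i⟩, hj', hj'F⟩

lemma onesOf_injective :
    Function.Injective (onesOf : (∀ i : Fin k, Fin (lam i) → Bool) → Finset (Fin k × ℕ)) := by
  intro F G h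
  funext i j
  have hiff : (i, (j : ℕ)) ∈ onesOf F ↔ (i, (j : ℕ)) ∈ onesOf G := by rw [h]
  simpa [mem_onesOf, ← Bool.eq_iff_iff] using hiff

lemma exists_onesOf_eq {S : Finset (Fin k × ℕ)} (hS : S ⊆ rowDiagram lam) :
    ∃ F : ∀ i : Fin k, Fin (lam i) → Bool, onesOf F = S := by
  refine ⟨fun i j => decide ((i, (j : ℕ)) ∈ S), ?_⟩
  ext ⟨i, j⟩
  simpa [mem_onesOf] using fun h => mem_rowDiagram.1 (hS h)

lemma Fval_eq_fillingSum (lam : Fin k → ℕ) (p q : ℤ) :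
    Fval lam p q = fillingSum (rowDiagram lam) p q := by
  classical
  refine sum_nbij onesOf ?_ onesOf_injective.injOn ?_ ?_
  · intro F hF
    exact mem_validFillings.2 ((isValidFilling_onesOf F).2 (mem_filter.1 hF).2)
  · intro S hS
    have hS' : IsValidFilling (rowDiagram lam) S := mem_validFillings.1 hS
    obtain ⟨F, rfl⟩ := exists_onesOf_eq hS'.subset
    exact ⟨F, mem_filter.2 ⟨mem_univ F, (isValidFilling_onesOf F).1 hS'⟩, rfl⟩
  · intro F _
    rw [card_rowDiagram_sdiff_onesOf, card_onesOf]

/-- The order embedding `ℕ ↪o ℕ` whose range misses exactly `m`, used to renumber the columns left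
after the deletion of column `m`. -/
def skip (m : ℕ) : ℕ ↪o ℕ :=
  OrderEmbedding.ofStrictMono (fun j => if j < m then j else j + 1) fun i j h => by
    dsimp only
    split_ifs <;> omega

lemma skip_apply (m j : ℕ) : skip m j = if j < m then j else j + 1 := rfl

lemma range_skip (m : ℕ) : Set.range (skip m) = {m}ᶜ := by
  ext j
  simp only [Set.mem_range, skip_apply, Set.mem_compl_singleton_iff]
  constructor
  · rintro ⟨i, rfl⟩
    split_ifs <;> omega
  · intro hj
    exact ⟨if j < m then j else j - 1, by split_ifs <;> omega⟩

lemma skip_lt_iff {m j l : ℕ} (h : m < l) : skip m j < l ↔ j < l - 1 := by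
  rw [skip_apply]
  split_ifs <;> omega

lemma filter_snd_ne_rowDiagram {m : ℕ} (hm : ∀ i, m < lam i) :
    {x ∈ rowDiagram lam | x.2 ≠ m} =
      (rowDiagram fun i => lam i - 1).map
        ((RelEmbedding.refl (α := Fin k) (· ≤ ·)).toEmbedding.prodMap (skip m).toEmbedding) := by
  ext ⟨i, j⟩
  simp only [mem_filter, mem_rowDiagram, mem_map, Prod.exists]
  constructor
  · rintro ⟨hj, hjm⟩
    obtain ⟨j, rfl⟩ : j ∈ Set.range (skip m) := range_skip m ▸ hjm
    exact ⟨i, j, (skip_lt_iff (hm i)).1 hj, rfl⟩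
  · rintro ⟨i', j', hj', h⟩
    obtain ⟨rfl, rfl⟩ := Prod.mk.inj h
    exact ⟨(skip_lt_iff (hm i')).2 hj', (range_skip m).subset ⟨j', rfl⟩⟩

lemma filter_fst_ne_last_rowDiagram {n : ℕ} (lam : Fin (n + 1) → ℕ) :
    {x ∈ rowDiagram lam | x.1 ≠ Fin.last n} =
      (rowDiagram fun i => lam i.castSucc).map
        (Fin.castSuccOrderEmb.toEmbedding.prodMap
          (RelEmbedding.refl (α := ℕ) (· ≤ ·)).toEmbedding) := by
  ext ⟨i, j⟩
  simp only [mem_filter, mem_rowDiagram, mem_map, Prod.exists]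
  constructor
  · rintro ⟨hj, hi⟩
    obtain ⟨i, rfl⟩ := Fin.exists_castSucc_eq.2 hi
    exact ⟨i, j, hj, rfl⟩
  · rintro ⟨i', j', hj', h⟩
    obtain ⟨rfl, rfl⟩ := Prod.mk.inj h
    exact ⟨hj', i'.castSucc_ne_last⟩

lemma erase_rowDiagram (i : Fin k) :
    (rowDiagram lam).erase (i, lam i - 1) = rowDiagram (Function.update lam i (lam i - 1)) := by
  ext ⟨i', j⟩
  obtain rfl | hi := eq_or_ne i' i
  · simp only [mem_erase, mem_rowDiagram, Function.update_self, ne_eq, Prod.mk.injEq, true_and]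
    omega
  · simp [hi]

lemma card_filter_fst_eq_rowDiagram (i : Fin k) : #{x ∈ rowDiagram lam | x.1 = i} = lam i := by
  have hrow : {x ∈ rowDiagram lam | x.1 = i} = {i} ×ˢ range (lam i) := by
    ext x
    simp only [mem_filter, mem_rowDiagram, mem_product, mem_singleton, mem_range]
    constructor
    · rintro ⟨hx, rfl⟩
      exact ⟨rfl, hx⟩
    · rintro ⟨rfl, hx⟩
      exact ⟨hx, rfl⟩
  rw [hrow, card_product, card_singleton, card_range, one_mul]

lemma card_filter_snd_eq_rowDiagram {m : ℕ} (hm : ∀ i, m < lam i) :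
    #{x ∈ rowDiagram lam | x.2 = m} = k := by
  have hcol : {x ∈ rowDiagram lam | x.2 = m} = univ ×ˢ {m} := by
    ext x
    simp only [mem_filter, mem_rowDiagram, mem_product, mem_univ, mem_singleton, true_and]
    exact and_iff_right_of_imp fun h => h ▸ hm x.1
  rw [hcol, card_product, card_univ, Fintype.card_fin, card_singleton, mul_one]

lemma isCornerBox_last_rowDiagram {n : ℕ} {lam : Fin (n + 1) → ℕ} (hpos : 0 < lam (Fin.last n)) :
    IsCornerBox (rowDiagram lam) (Fin.last n, lam (Fin.last n) - 1) where
  mem := by simpa using hpos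
  row_le i _ := Fin.le_last i
  col_le j hj := Nat.le_sub_one_of_lt (mem_rowDiagram.1 hj)

theorem Fval_recurrence_general {R : Type*} [CommSemiring R] {n : ℕ} (hn : n ≠ 0)
    (lam : Fin (n + 1) → ℕ) (hpos : 0 < lam (Fin.last n))
    (hlast : ∀ i, lam (Fin.last n) ≤ lam i) (p q : R) :
    fillingSum (rowDiagram lam) p q =
      p ^ n * q * fillingSum (rowDiagram fun i => lam i - 1) p q +
      q * fillingSum
        (rowDiagram (Function.update lam (Fin.last n) (lam (Fin.last n) - 1))) p q +
      p ^ lam (Fin.last n) * fillingSum (rowDiagram fun i : Fin n => lam i.castSucc) p q := by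
  have hc := isCornerBox_last_rowDiagram hpos
  have hcol_lt : ∀ i, lam (Fin.last n) - 1 < lam i := fun i => by have := hlast i; omega
  have hrow : ∀ j, (Fin.last n, j) ∈ rowDiagram lam → ∃ i ≠ Fin.last n, (i, j) ∈ rowDiagram lam :=
    fun j hj => ⟨0, (Fin.pos_iff_ne_zero.2 (by simpa [Fin.ext_iff])).ne, mem_rowDiagram.2 <|
      (mem_rowDiagram.1 hj).trans_le (hlast 0)⟩
  have hcard : #{x ∈ (rowDiagram lam).erase (Fin.last n, lam (Fin.last n) - 1) |
      x.2 = lam (Fin.last n) - 1} = n := by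
    rw [filter_erase, card_erase_of_mem (by simpa using hc.mem),
      card_filter_snd_eq_rowDiagram hcol_lt, Nat.add_sub_cancel]
  rw [hc.fillingSum_recurrence hrow, hcard, card_filter_fst_eq_rowDiagram, erase_rowDiagram,
    filter_snd_ne_rowDiagram hcol_lt, filter_fst_ne_last_rowDiagram, fillingSum_map, fillingSum_map]

end RowDiagrams

theorem Fval_recurrence (k : ℕ) (hk : 2 ≤ k) (lam : Fin k → ℕ) (hanti : Antitone lam)
    (hpos : ∀ i, 1 ≤ lam i) (p q : ℤ) :
    Fval lam p q =
      p ^ (k - 1) * q * Fval (fun i => lam i - 1) p q +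
      q * Fval (Function.update lam ⟨k - 1, by omega⟩ (lam ⟨k - 1, by omega⟩ - 1)) p q +
      p ^ (lam ⟨k - 1, by omega⟩) *
        Fval (fun i : Fin (k - 1) => lam (Fin.castLE (Nat.sub_le k 1) i)) p q := by
  obtain ⟨n, rfl⟩ : ∃ n, k = n + 1 := ⟨k - 1, by omega⟩
  simp only [Fval_eq_fillingSum]
  exact Fval_recurrence_general (by omega) lam (hpos _) (fun i => hanti (Fin.le_last i)) p q
end

section
/- The number of permutation tableaux whose underlying partition is contained in a k×(n-k) rectangle and has exactly n-k columns equals the number of permutations of {1,...,n} with exactly k weak excedances. -/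
open Finset


/-!
Weight a tableau by `x ^ u`, where `u` is its number of unrestricted rows, those without a `0`
below a `1`. Look at the bottom left corner of the rectangle. If it lies outside the diagram, the
bottom row is empty, and removing it divides the weight by `x`. Otherwise the first column is full;
its set of ones is an arbitrary nonempty set of rows that are unrestricted in the remaining tableau,
and summing over these sets replaces `x ^ u` by `x ((x + 1) ^ u - x ^ u)`. Hence, with `X` marking
rows and `Δ` the forward difference in `x`, the generating polynomial for rows and columns adding
up to `n` is `F n`, where `F 0 = 1` and `F (n + 1) = A (F n)` with `A = x (X + Δ)`. The operators
`B n = (x + n) X + (X - X²) ∂` satisfy `A ∘ B n = B (n + 1) ∘ A` and `A 1 = B 0 1`, so by induction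
`F (n + 1) = B n (F n)`, which at `x = 1` is the recurrence of the Eulerian polynomial
`∑ π, X ^ wex π`.
-/

namespace PermTableau

open Polynomial

section WeakExcedances

variable {R : Type*} {n : ℕ}

lemma wexB_decomposeFin_symm_zero (e : Equiv.Perm (Fin n)) :
    wexB (Equiv.Perm.decomposeFin.symm (0, e)) =
      Finset.cons 0 ((wexB e).map (Fin.succEmb n)) (by simp) := by
  ext j
  cases j using Fin.cases <;> simp [wexB]

lemma wexB_decomposeFin_symm_succ (e : Equiv.Perm (Fin n)) (i : Fin n) :
    wexB (Equiv.Perm.decomposeFin.symm ((e i).succ, e)) =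
      Finset.cons 0 (((wexB e).erase i).map (Fin.succEmb n)) (by simp) := by
  ext j
  cases j using Fin.cases with
  | zero => simp [wexB]
  | succ j =>
    rcases eq_or_ne j i with rfl | hji
    · simp [wexB]
    · have hswap : Equiv.swap 0 (e i).succ (e j).succ = (e j).succ :=
        Equiv.swap_apply_of_ne_of_ne (Fin.succ_ne_zero _) (by simpa using hji)
      simp [wexB, hswap, hji]

lemma wex_decomposeFin_symm_zero (e : Equiv.Perm (Fin n)) :
    wex (Equiv.Perm.decomposeFin.symm (0, e)) = wex e + 1 := by
  rw [wex, wexB_decomposeFin_symm_zero, card_cons, card_map, wex]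

lemma wex_decomposeFin_symm_succ (e : Equiv.Perm (Fin n)) (i : Fin n) :
    wex (Equiv.Perm.decomposeFin.symm ((e i).succ, e)) =
      if i ≤ e i then wex e else wex e + 1 := by
  rw [wex, wexB_decomposeFin_symm_succ, card_cons, card_map, wex]
  split_ifs with hi
  · exact card_erase_add_one (by simpa [wexB] using hi)
  · rw [erase_eq_of_notMem (by simpa [wexB] using hi)]

variable (R n) in
/-- The Eulerian polynomial `∑ π, X ^ wex π` over the permutations of `Fin n`. -/
noncomputable def wexPoly [Semiring R] : R[X] :=
  ∑ π : Equiv.Perm (Fin n), X ^ wex π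

lemma coeff_wexPoly [Semiring R] (k : ℕ) :
    (wexPoly R n).coeff k = #{π : Equiv.Perm (Fin n) | wex π = k} := by
  simp only [wexPoly, finsetSum_coeff, coeff_X_pow, sum_boole, eq_comm]

lemma sum_X_pow_wex_decomposeFin_symm [CommRing R] (e : Equiv.Perm (Fin n)) :
    ∑ p : Fin (n + 1), (X : R[X]) ^ wex (Equiv.Perm.decomposeFin.symm (p, e)) =
      (n + 1 : R[X]) * X * X ^ wex e + (X - X ^ 2) * derivative (X ^ wex e) := by
  have hsplit (i : Fin n) : (X : R[X]) ^ (if i ≤ e i then wex e else wex e + 1) =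
      X ^ (wex e + 1) + if i ≤ e i then X ^ wex e - X ^ (wex e + 1) else 0 := by
    split_ifs <;> ring
  have hderiv : X * derivative ((X : R[X]) ^ wex e) = (wex e : R[X]) * X ^ wex e := by
    cases wex e with
    | zero => simp
    | succ w => simp only [derivative_X_pow, C_eq_natCast, Nat.add_sub_cancel]; ring
  have hcard : #{i | i ≤ e i} = wex e := rfl
  calc ∑ p : Fin (n + 1), (X : R[X]) ^ wex (Equiv.Perm.decomposeFin.symm (p, e))
      = X ^ (wex e + 1) + ∑ i : Fin n, X ^ (if i ≤ e i then wex e else wex e + 1) := by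
        rw [Fin.sum_univ_succ, wex_decomposeFin_symm_zero, ← Equiv.sum_comp e]
        simp only [wex_decomposeFin_symm_succ]
    _ = X ^ (wex e + 1) + ((n : R[X]) * X ^ (wex e + 1) +
          (wex e : R[X]) * (X ^ wex e - X ^ (wex e + 1))) := by
        simp only [hsplit, sum_add_distrib, ← sum_filter, sum_const, card_univ, Fintype.card_fin,
          nsmul_eq_mul, hcard]
    _ = (n + 1 : R[X]) * X * X ^ wex e + (X - X ^ 2) * derivative (X ^ wex e) := by
        linear_combination (X - 1) * hderiv

theorem wexPoly_succ [CommRing R] :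
    wexPoly R (n + 1) =
      (n + 1 : R[X]) * X * wexPoly R n + (X - X ^ 2) * derivative (wexPoly R n) := by
  rw [wexPoly, ← Equiv.sum_comp Equiv.Perm.decomposeFin.symm, Fintype.sum_prod_type_right]
  simp only [sum_X_pow_wex_decomposeFin_symm, sum_add_distrib, ← mul_sum, ← derivative_sum, wexPoly]

end WeakExcedances

section Recurrences

variable {R : Type*} [CommRing R]

/-- The operator on polynomials in `X` depending on a parameter `x` by which the generating
polynomials of permutation tableaux arise from one another: the summand with `X` accounts for the
removal of an empty row, the forward difference in `x` for the removal of a full column. -/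
noncomputable def columnOp (F : R → R[X]) (x : R) : R[X] :=
  C x * (X * F x + (F (x + 1) - F x))

/-- The operator of the Eulerian recurrence, deformed by a parameter `x` that is `1` in the
classical case. -/
noncomputable def eulerianOp (n : ℕ) (F : R → R[X]) (x : R) : R[X] :=
  (C x + (n : R[X])) * X * F x + (X - X ^ 2) * derivative (F x)

lemma columnOp_eulerianOp (n : ℕ) (F : R → R[X]) :
    columnOp (eulerianOp n F) = eulerianOp (n + 1) (columnOp F) := by
  funext x
  simp only [columnOp, eulerianOp, derivative_C, derivative_add, derivative_sub,
    derivative_mul, derivative_X, C_add, C_1, Nat.cast_add, Nat.cast_one]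
  ring

/-- The generating polynomial of the permutation tableaux whose numbers of rows and columns add
up to `n`, defined by its recurrence: the coefficient of `X ^ k` is `tableauSum k (n - k) x`. -/
noncomputable def tableauPoly : ℕ → R → R[X]
  | 0 => 1
  | n + 1 => columnOp (tableauPoly n)

theorem tableauPoly_succ_eq_eulerianOp (n : ℕ) :
    tableauPoly (R := R) (n + 1) = eulerianOp n (tableauPoly n) := by
  induction n with
  | zero =>
    funext x
    simp [tableauPoly, columnOp, eulerianOp]
  | succ n ih =>
    calc tableauPoly (n + 2) = columnOp (tableauPoly (n + 1)) := rfl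
      _ = columnOp (eulerianOp n (tableauPoly n)) := by rw [ih]
      _ = eulerianOp (n + 1) (columnOp (tableauPoly n)) := columnOp_eulerianOp n _

theorem tableauPoly_one (n : ℕ) : tableauPoly n (1 : R) = wexPoly R n := by
  induction n with
  | zero => simp [tableauPoly, wexPoly, wex, wexB]
  | succ n ih =>
    rw [tableauPoly_succ_eq_eulerianOp, eulerianOp, wexPoly_succ, ih, C_1, add_comm 1]

lemma coeff_zero_tableauPoly_succ (n : ℕ) (x : R) : (tableauPoly (n + 1) x).coeff 0 = 0 := by
  simp [tableauPoly_succ_eq_eulerianOp, eulerianOp, mul_coeff_zero]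

lemma coeff_succ_tableauPoly_succ (n k : ℕ) (x : R) :
    (tableauPoly (n + 1) x).coeff (k + 1) = x * (tableauPoly n x).coeff k +
      x * ((tableauPoly n (x + 1)).coeff (k + 1) - (tableauPoly n x).coeff (k + 1)) := by
  simp [tableauPoly, columnOp, mul_add]

lemma coeff_tableauPoly_eq_zero {n k : ℕ} (hnk : n < k) (x : R) :
    (tableauPoly n x).coeff k = 0 := by
  induction n generalizing k x with
  | zero => simp [tableauPoly, coeff_one, hnk.ne']
  | succ n ih =>
    obtain ⟨k, rfl⟩ := Nat.exists_eq_add_one_of_ne_zero hnk.ne_bot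
    simp [coeff_succ_tableauPoly_succ, ih (Nat.lt_of_succ_lt_succ hnk),
      ih (Nat.lt_of_succ_lt hnk)]

end Recurrences

section Column

variable {R α : Type*} [LinearOrder α]

/-- The rows of `U` that stay unrestricted when a leftmost column with ones exactly in the rows
`S ⊆ U` is added: a row outside `S` has a `0` there, which must not lie below a `1`. -/
def survivingRows (U S : Finset α) : Finset α :=
  {i ∈ U | i ∈ S ∨ ∀ i' ∈ S, i ≤ i'}

lemma survivingRows_empty (U : Finset α) : survivingRows U ∅ = U := by
  simp [survivingRows]

lemma survivingRows_subset (U S : Finset α) : survivingRows U S ⊆ U :=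
  filter_subset _ _

lemma survivingRows_insert_left {U S : Finset α} {a : α} (ha : ∀ i ∈ S, a ≤ i) :
    survivingRows (insert a U) S = insert a (survivingRows U S) := by
  simp only [survivingRows, filter_insert, if_pos (Or.inr ha)]

lemma survivingRows_insert_insert {U S : Finset α} {a : α} (ha : ∀ i ∈ U, a < i) (hS : S ⊆ U) :
    survivingRows (insert a U) (insert a S) = insert a S := by
  ext i
  simp only [survivingRows, mem_filter, mem_insert, forall_eq_or_imp]
  grind

lemma sum_powerset_pow_card_survivingRows [CommSemiring R] (U : Finset α) (x : R) :
    ∑ S ∈ U.powerset, x ^ #(survivingRows U S) + x * x ^ #U = x * (x + 1) ^ #U + x ^ #U := by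
  induction U using Finset.induction_on_min with
  | empty => simp [survivingRows, add_comm]
  | insert a U ha ih =>
    have haU : a ∉ U := fun h => (ha a h).false
    have hwithout : ∀ S ∈ U.powerset,
        x ^ #(survivingRows (insert a U) S) = x * x ^ #(survivingRows U S) := fun S hS => by
      rw [survivingRows_insert_left fun i hi => (ha i (mem_powerset.1 hS hi)).le,
        card_insert_of_notMem (notMem_mono (survivingRows_subset U S) haU), pow_succ']
    have hwith : ∀ S ∈ U.powerset,
        x ^ #(survivingRows (insert a U) (insert a S)) = x * x ^ #S := fun S hS => by
      rw [survivingRows_insert_insert ha (mem_powerset.1 hS),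
        card_insert_of_notMem (notMem_mono (mem_powerset.1 hS) haU), pow_succ']
    have hbinomial : ∑ S ∈ U.powerset, x ^ #S = (x + 1) ^ #U := by
      simpa using sum_pow_mul_eq_add_pow x 1 U
    rw [sum_powerset_insert haU, sum_congr rfl hwithout, sum_congr rfl hwith, ← mul_sum,
      ← mul_sum, hbinomial, card_insert_of_notMem haU]
    calc x * ∑ S ∈ U.powerset, x ^ #(survivingRows U S) + x * (x + 1) ^ #U + x * x ^ (#U + 1)
        = x * (∑ S ∈ U.powerset, x ^ #(survivingRows U S) + x * x ^ #U) + x * (x + 1) ^ #U := by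
          ring
      _ = x * (x + 1) ^ (#U + 1) + x ^ (#U + 1) := by rw [ih]; ring

lemma sum_nonempty_pow_card_survivingRows [CommRing R] (U : Finset α) (x : R) :
    ∑ S ∈ U.powerset.erase ∅, x ^ #(survivingRows U S) = x * ((x + 1) ^ #U - x ^ #U) := by
  rw [sum_erase_eq_sub (empty_mem_powerset U), survivingRows_empty]
  linear_combination sum_powerset_pow_card_survivingRows U x

end Column

section Tableaux

variable {k m : ℕ}

instance : DecidablePred (IsPermTableau (k := k) (m := m)) := fun _ =>
  inferInstanceAs (Decidable (_ ∧ _ ∧ _))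

/-- The rows of `T` that contain no restricted zero, i.e. no `0` with a `1` above it. These are
the rows in which a new leftmost column may contain a `1`. -/
def unrestrictedRows (T : Fin k → Fin m → Fin 3) : Finset (Fin k) :=
  {i | ∀ j, T i j = 0 → ∀ i' < i, T i' j ≠ 1}

lemma mem_unrestrictedRows {T : Fin k → Fin m → Fin 3} {i : Fin k} :
    i ∈ unrestrictedRows T ↔ ∀ j, T i j = 0 → ∀ i' < i, T i' j ≠ 1 := by
  simp [unrestrictedRows]

/-- `T` with a row of length `0` added at the bottom. -/
def addEmptyRow (T : Fin k → Fin m → Fin 3) : Fin (k + 1) → Fin m → Fin 3 :=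
  Fin.snoc (α := fun _ => Fin m → Fin 3) T fun _ => 2

@[simp] lemma addEmptyRow_castSucc (T : Fin k → Fin m → Fin 3) (i : Fin k) :
    addEmptyRow T i.castSucc = T i :=
  Fin.snoc_castSucc ..

@[simp] lemma addEmptyRow_last (T : Fin k → Fin m → Fin 3) :
    addEmptyRow T (Fin.last k) = fun _ => 2 :=
  Fin.snoc_last ..

lemma isPermTableau_addEmptyRow {T : Fin k → Fin m → Fin 3} :
    IsPermTableau (addEmptyRow T) ↔ IsPermTableau T := by
  simp [IsPermTableau, Fin.exists_fin_succ', Fin.forall_fin_succ']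

lemma card_unrestrictedRows_addEmptyRow (T : Fin k → Fin m → Fin 3) :
    #(unrestrictedRows (addEmptyRow T)) = #(unrestrictedRows T) + 1 := by
  rw [unrestrictedRows, unrestrictedRows, card_filter, card_filter, Fin.sum_univ_castSucc]
  simp [Fin.forall_fin_succ']

lemma addEmptyRow_init {T : Fin (k + 1) → Fin (m + 1) → Fin 3} (hT : IsPermTableau T)
    (hcorner : T (Fin.last k) 0 = 2) : addEmptyRow (Fin.init T) = T := by
  have hlast : T (Fin.last k) = fun _ => 2 := funext fun j => by_contra fun hj =>
    hT.2.1 _ j hj _ 0 le_rfl (Fin.zero_le j) hcorner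
  rw [addEmptyRow, ← hlast, Fin.snoc_init_self]

/-- `T` with a full column added on the left, having ones exactly in the rows in `S`. -/
def addColumn (T : Fin k → Fin m → Fin 3) (S : Finset (Fin k)) : Fin k → Fin (m + 1) → Fin 3 :=
  fun i => Fin.cons (α := fun _ => Fin 3) (if i ∈ S then 1 else 0) (T i)

/-- The set of rows with a `1` in the leftmost column. -/
def firstColumnOnes (T : Fin k → Fin (m + 1) → Fin 3) : Finset (Fin k) :=
  {i | T i 0 = 1}

section AddColumn

variable {T : Fin k → Fin m → Fin 3} {S : Finset (Fin k)} {i : Fin k}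

@[simp] lemma addColumn_zero_eq_one : addColumn T S i 0 = 1 ↔ i ∈ S := by
  simp [addColumn]

@[simp] lemma addColumn_zero_eq_zero : addColumn T S i 0 = 0 ↔ i ∉ S := by
  simp [addColumn]

@[simp] lemma addColumn_zero_ne_two : addColumn T S i 0 ≠ 2 := by
  by_cases hi : i ∈ S <;> simp [addColumn, hi]

@[simp] lemma addColumn_succ (j : Fin m) : addColumn T S i j.succ = T i j := by
  simp [addColumn]

lemma isPermTableau_addColumn :
    IsPermTableau (addColumn T S) ↔ IsPermTableau T ∧ S.Nonempty ∧ S ⊆ unrestrictedRows T := by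
  have hones : (∀ j, ∃ i, addColumn T S i j = 1) ↔ S.Nonempty ∧ ∀ j, ∃ i, T i j = 1 := by
    simp [Fin.forall_fin_succ, Finset.Nonempty]
  have hshape : (∀ i j, addColumn T S i j ≠ 2 →
      ∀ i' j', i' ≤ i → j' ≤ j → addColumn T S i' j' ≠ 2) ↔
      ∀ i j, T i j ≠ 2 → ∀ i' j', i' ≤ i → j' ≤ j → T i' j' ≠ 2 := by
    simp [Fin.forall_fin_succ]
  have hzeros : (∀ i j, addColumn T S i j = 0 →
      ¬ ((∃ i' < i, addColumn T S i' j = 1) ∧ ∃ j' < j, addColumn T S i j' = 1)) ↔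
      (∀ i j, T i j = 0 → ¬ ((∃ i' < i, T i' j = 1) ∧ ∃ j' < j, T i j' = 1)) ∧
        S ⊆ unrestrictedRows T := by
    simp only [Fin.forall_fin_succ, Fin.exists_fin_succ, subset_iff, mem_unrestrictedRows]
    simp only [addColumn_zero_eq_zero, addColumn_zero_eq_one, addColumn_succ, Fin.succ_pos,
      Fin.succ_lt_succ_iff, lt_self_iff_false, not_lt_zero, true_and]
    grind
  rw [IsPermTableau, hones, hshape, hzeros, IsPermTableau]
  tauto

lemma unrestrictedRows_addColumn :
    unrestrictedRows (addColumn T S) = survivingRows (unrestrictedRows T) S := by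
  ext i
  simp only [mem_unrestrictedRows, survivingRows, mem_filter, Fin.forall_fin_succ]
  simp only [ne_eq, addColumn_zero_eq_zero, addColumn_zero_eq_one, addColumn_succ]
  grind

lemma firstColumnOnes_addColumn : firstColumnOnes (addColumn T S) = S := by
  simp [firstColumnOnes]

end AddColumn

lemma addColumn_tail {T : Fin (k + 1) → Fin (m + 1) → Fin 3} (hT : IsPermTableau T)
    (hcorner : T (Fin.last k) 0 ≠ 2) :
    addColumn (fun i => Fin.tail (T i)) (firstColumnOnes T) = T := by
  funext i
  have hbinary : T i 0 = if i ∈ firstColumnOnes T then 1 else 0 := by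
    have hfull : T i 0 ≠ 2 := hT.2.1 _ _ hcorner i 0 (Fin.le_last i) le_rfl
    simp only [firstColumnOnes, mem_filter_univ]
    grind
  rw [addColumn, ← hbinary, Fin.cons_self_tail]

end Tableaux

section Counting

variable {R : Type*}

section CommSemiring

variable [CommSemiring R] (k m : ℕ) (x : R)

/-- The sum of `x ^ u` over the permutation tableaux with `k` rows and `m` columns, where `u` is
the number of unrestricted rows. -/
def tableauSum : R :=
  ∑ T : Fin k → Fin m → Fin 3 with IsPermTableau T, x ^ #(unrestrictedRows T)

lemma tableauSum_one :
    tableauSum k m (1 : R) = Nat.card {T : Fin k → Fin m → Fin 3 // IsPermTableau T} := by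
  simp [tableauSum, Nat.card_eq_fintype_card, Fintype.card_subtype]

lemma tableauSum_zero_right : tableauSum k 0 x = x ^ k := by
  simp [tableauSum, IsPermTableau, unrestrictedRows]

lemma tableauSum_zero_succ : tableauSum 0 (m + 1) x = 0 := by
  simp [tableauSum, IsPermTableau]

lemma sum_tableaux_corner_eq_two :
    ∑ T : Fin (k + 1) → Fin (m + 1) → Fin 3 with IsPermTableau T ∧ T (Fin.last k) 0 = 2,
      x ^ #(unrestrictedRows T) = x * tableauSum k (m + 1) x := by
  rw [tableauSum, mul_sum]
  refine sum_nbij' Fin.init addEmptyRow ?_ ?_ ?_ ?_ ?_ <;> simp only [mem_filter_univ]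
  · rintro T ⟨hT, hcorner⟩
    rwa [← isPermTableau_addEmptyRow, addEmptyRow_init hT hcorner]
  · exact fun T hT => ⟨isPermTableau_addEmptyRow.2 hT, by rw [addEmptyRow_last]⟩
  · exact fun T ⟨hT, hcorner⟩ => addEmptyRow_init hT hcorner
  · exact fun T _ => Fin.init_snoc ..
  · rintro T ⟨hT, hcorner⟩
    rw [← pow_succ', ← card_unrestrictedRows_addEmptyRow, addEmptyRow_init hT hcorner]

end CommSemiring

variable [CommRing R]

lemma sum_tableaux_corner_ne_two (k m : ℕ) (x : R) :
    ∑ T : Fin (k + 1) → Fin (m + 1) → Fin 3 with IsPermTableau T ∧ T (Fin.last k) 0 ≠ 2,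
      x ^ #(unrestrictedRows T) =
        x * (tableauSum (k + 1) m (x + 1) - tableauSum (k + 1) m x) := by
  simp only [tableauSum, ← sum_sub_distrib, mul_sum, ← sum_nonempty_pow_card_survivingRows]
  rw [sum_sigma']
  refine sum_nbij' (fun T => ⟨fun i => Fin.tail (T i), firstColumnOnes T⟩)
    (fun p => addColumn p.1 p.2) ?_ ?_ ?_ ?_ ?_ <;>
    simp only [mem_sigma, mem_filter_univ, mem_erase, mem_powerset, ← nonempty_iff_ne_empty]
  · rintro T ⟨hT, hcorner⟩
    rwa [← isPermTableau_addColumn, addColumn_tail hT hcorner]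
  · exact fun p hp => ⟨isPermTableau_addColumn.2 hp, addColumn_zero_ne_two⟩
  · exact fun T ⟨hT, hcorner⟩ => addColumn_tail hT hcorner
  · rintro ⟨T, S⟩ -
    rw [firstColumnOnes_addColumn]
    rfl
  · rintro T ⟨hT, hcorner⟩
    rw [← unrestrictedRows_addColumn, addColumn_tail hT hcorner]

theorem tableauSum_succ_succ (k m : ℕ) (x : R) :
    tableauSum (k + 1) (m + 1) x = x * tableauSum k (m + 1) x +
      x * (tableauSum (k + 1) m (x + 1) - tableauSum (k + 1) m x) := by
  rw [← sum_tableaux_corner_eq_two, ← sum_tableaux_corner_ne_two, ← filter_filter,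
    ← filter_filter, sum_filter_add_sum_filter_not, tableauSum]

theorem tableauSum_eq_coeff_tableauPoly (k m : ℕ) (x : R) :
    tableauSum k m x = (tableauPoly (k + m) x).coeff k := by
  match k, m with
  | 0, 0 => simp [tableauSum_zero_right, tableauPoly]
  | 0, m + 1 => rw [tableauSum_zero_succ, ← Nat.add_assoc, coeff_zero_tableauPoly_succ]
  | k + 1, 0 =>
    have hrow := tableauSum_eq_coeff_tableauPoly k 0 x
    rw [tableauSum_zero_right] at hrow ⊢
    rw [Nat.add_zero] at hrow ⊢
    rw [coeff_succ_tableauPoly_succ, ← hrow, coeff_tableauPoly_eq_zero k.lt_succ_self,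
      coeff_tableauPoly_eq_zero k.lt_succ_self]
    ring
  | k + 1, m + 1 =>
    rw [tableauSum_succ_succ, tableauSum_eq_coeff_tableauPoly k (m + 1),
      tableauSum_eq_coeff_tableauPoly (k + 1) m, tableauSum_eq_coeff_tableauPoly (k + 1) m,
      ← Nat.add_assoc (k + 1) m 1, coeff_succ_tableauPoly_succ, Nat.add_right_comm k 1 m,
      Nat.add_assoc k m 1]
termination_by k + m

end Counting

end PermTableau

theorem card_tableaux_eq_card_wex (n k : ℕ) (hk : k ≤ n) :
    Nat.card {T : Fin k → Fin (n - k) → Fin 3 // IsPermTableau T} =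
    (Finset.univ.filter (fun π : Equiv.Perm (Fin n) => wex π = k)).card := by
  open PermTableau in
  have hcast : (Nat.card {T : Fin k → Fin (n - k) → Fin 3 // IsPermTableau T} : ℤ) =
      #{π : Equiv.Perm (Fin n) | wex π = k} := by
    rw [← tableauSum_one, tableauSum_eq_coeff_tableauPoly, Nat.add_sub_cancel' hk,
      tableauPoly_one, coeff_wexPoly]
  exact_mod_cast hcast
end
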